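/- arXiv:1511.00165 — 4 statements merged into one kernel-verified Lean document; each statement's English description precedes it below -/
import Mathlib

section
/- Let $V_1,\ldots,V_r$ be subspaces of a finite-dimensional vector space $V$ over a field $F$. Then the maximum number $g$ such that one can choose vectors $v_{i_1}\in V_{i_1},\ldots,v_{i_g}\in V_{i_g}$ from $g$ distinct subspaces (indices $i_1 < \cdots < i_g$) which are linearly independent in $V$ equals $\min_{I \subseteq \{1,\ldots,r\}} \left[\dim\left(\sum_{i\in I} V_i\right) + r - |I|\right]$. -/
/-!
The rank inequalities are necessary because at most `dim (∑_{i ∈ I} W i)` of the chosen vectors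
have their index in `I`. For sufficiency, shrink the subspaces one at a time while keeping the
inequalities. A subspace `W i` of dimension at least two is a sum `A + B` of two proper subspaces,
and one of them may replace `W i`: if both failed, say at index sets `I` and `J`, submodularity of
the dimension would contradict the inequalities of the original family at `I ∪ J ∪ {i}` and
`I ∩ J`. Once every `W i` is spanned by a single vector, the inequality for the full index set says
that these vectors have rank at least `g`.
-/

open Module Finset

section Lattice

variable {α : Type*} [Lattice α] [BoundedOrder α] [IsModularLattice α] [ComplementedLattice α]

theorem isAtom_of_supIrred {a : α} (ha : SupIrred a) : IsAtom a := by
  refine ⟨ha.ne_bot, fun b hb => ?_⟩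
  obtain ⟨c, hbc⟩ := exists_isCompl b
  have hsup : b ⊔ c ⊓ a = a := by
    rw [← sup_inf_assoc_of_le c hb.le, hbc.sup_eq_top, top_inf_eq]
  have hac : a ≤ c := inf_eq_right.1 ((ha.2 hsup).resolve_left hb.ne)
  exact hbc.disjoint.eq_bot_of_le (hb.le.trans hac)

end Lattice

section DivisionRing

variable {K V ι : Type*} [DivisionRing K] [AddCommGroup V] [Module K V]

theorem exists_sup_eq_of_not_isPrincipal {U : Submodule K V} (hU : ¬ U.IsPrincipal) :
    ∃ A B : Submodule K V, A ⊔ B = U ∧ A < U ∧ B < U := by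
  have hirred : ¬ SupIrred U := fun h => by
    obtain ⟨v, -, hv⟩ := (atom_iff_nonzero_span U).1 (isAtom_of_supIrred h)
    exact hU ⟨v, hv⟩
  refine (not_supIrred.1 hirred).resolve_left fun hmin => hU ?_
  rw [hmin.eq_bot]
  infer_instance

theorem card_le_finrank_of_linearIndepOn {v : ι → V} {s : Finset ι} {U : Submodule K V}
    [FiniteDimensional K U] (hv : LinearIndepOn K v s) (hU : ∀ i ∈ s, v i ∈ U) :
    #s ≤ finrank K U := by
  have hli : LinearIndependent K fun i : s => (⟨v i, hU i i.2⟩ : U) := .of_comp U.subtype hv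
  simpa using hli.fintype_card_le_finrank

theorem exists_linearIndepOn_card_eq [Finite ι] {v : ι → V} {g : ℕ}
    (hg : g ≤ finrank K (Submodule.span K (Set.range v))) :
    ∃ s : Finset ι, #s = g ∧ LinearIndepOn K v s := by
  obtain ⟨b, -, -, hspan, hb⟩ :=
    exists_linearIndepOn_extension (linearIndepOn_empty K v) (Set.empty_subset Set.univ)
  lift b to Finset ι using b.toFinite
  have hgb : g ≤ #b := by
    rw [Set.image_univ, Set.image_eq_range] at hspan
    have := FiniteDimensional.span_of_finite K (Set.finite_range fun i : b => v i)
    calc g ≤ finrank K (Submodule.span K (Set.range v)) := hg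
      _ ≤ finrank K (Submodule.span K (Set.range fun i : b => v i)) :=
        Submodule.finrank_mono (Submodule.span_le.2 hspan)
      _ ≤ #b := (finrank_range_le_card _).trans_eq (Fintype.card_coe b)
  obtain ⟨s, hsb, hs⟩ := exists_subset_card_eq hgb
  exact ⟨s, hs, hb.mono (coe_subset.2 hsb)⟩

/-- `W` admits a partial system of representatives of size `g`: vectors `v i ∈ W i`, for `g`
distinct indices `i`, that are linearly independent. The values of `v` off `s` are irrelevant. -/
def HasIndependentReps (W : ι → Submodule K V) (g : ℕ) : Prop :=
  ∃ (s : Finset ι) (v : ι → V), #s = g ∧ (∀ i ∈ s, v i ∈ W i) ∧ LinearIndepOn K v s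

theorem HasIndependentReps.mono {W W' : ι → Submodule K V} {g : ℕ} (hW : W ≤ W')
    (h : HasIndependentReps W g) : HasIndependentReps W' g := by
  obtain ⟨s, v, hs, hv, hli⟩ := h
  exact ⟨s, v, hs, fun i hi => hW i (hv i hi), hli⟩

variable [Fintype ι]

/-- With `r = |ι|`, the inequalities `g ≤ dim (∑_{i ∈ I} W i) + (r - |I|)` of König's theorem;
`|I|` is moved to the left to avoid truncated subtraction. -/
def KonigCondition (W : ι → Submodule K V) (g : ℕ) : Prop :=
  ∀ I : Finset ι, g + #I ≤ finrank K ↥(⨆ i ∈ I, W i) + Fintype.card ι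

theorem konigCondition_iff_le_inf' {W : ι → Submodule K V} {g : ℕ} :
    KonigCondition W g ↔ g ≤ univ.inf' univ_nonempty
      fun I : Finset ι => finrank K ↥(⨆ i ∈ I, W i) + (Fintype.card ι - #I) := by
  simp only [KonigCondition, le_inf'_iff, mem_univ, true_imp_iff]
  refine forall_congr' fun I => ?_
  have := card_le_univ I
  lia

theorem KonigCondition.hasIndependentReps_of_isPrincipal {W : ι → Submodule K V} {g : ℕ}
    (h : KonigCondition W g) (hW : ∀ i, (W i).IsPrincipal) : HasIndependentReps W g := by
  choose v hv using fun i => (hW i).principal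
  have hspan : Submodule.span K (Set.range v) = ⨆ i ∈ univ, W i := by
    simp [Submodule.span_range_eq_iSup, hv]
  have hg : g ≤ finrank K (Submodule.span K (Set.range v)) := by
    have huniv := h univ
    rw [card_univ, ← hspan] at huniv
    exact le_of_add_le_add_right huniv
  obtain ⟨s, hs, hli⟩ := exists_linearIndepOn_card_eq hg
  exact ⟨s, v, hs, fun i _ => hv i ▸ Submodule.mem_span_singleton_self _, hli⟩

theorem sum_finrank_update_lt [DecidableEq ι] {W : ι → Submodule K V}
    [∀ i, FiniteDimensional K (W i)] {i : ι} {A : Submodule K V} (hA : A < W i) :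
    ∑ j, finrank K (Function.update W i A j) < ∑ j, finrank K (W j) := by
  have hle : Function.update W i A ≤ W := update_le_self_iff.2 hA.le
  refine sum_lt_sum (fun j _ => Submodule.finrank_mono (hle j)) ⟨i, mem_univ i, ?_⟩
  rw [Function.update_self]
  exact Submodule.finrank_lt_finrank_of_lt hA

theorem KonigCondition.exists_of_not_update [DecidableEq ι] {W : ι → Submodule K V} {g : ℕ}
    (h : KonigCondition W g) {i : ι} {A : Submodule K V}
    (hA : ¬ KonigCondition (Function.update W i A) g) :
    ∃ I : Finset ι, i ∉ I ∧
      finrank K ↥(A ⊔ ⨆ j ∈ I, W j) + Fintype.card ι < g + (#I + 1) := by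
  simp only [KonigCondition, not_forall, not_le] at hA
  obtain ⟨I, hI⟩ := hA
  by_cases hiI : i ∈ I
  · refine ⟨I.erase i, notMem_erase i I, ?_⟩
    rw [card_erase_add_one hiI, ← iSup_insert_update _ (notMem_erase i I), insert_erase hiI]
    exact hI
  · have hsup : ⨆ j ∈ I, Function.update W i A j = ⨆ j ∈ I, W j :=
      biSup_congr fun j hj => Function.update_of_ne (ne_of_mem_of_not_mem hj hiI) _ _
    rw [hsup] at hI
    exact absurd (h I) hI.not_ge

theorem KonigCondition.update_or_update [DecidableEq ι] {W : ι → Submodule K V}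
    [∀ i, FiniteDimensional K (W i)] {g : ℕ} (h : KonigCondition W g) {i : ι}
    {A B : Submodule K V} (hAB : A ⊔ B = W i) :
    KonigCondition (Function.update W i A) g ∨ KonigCondition (Function.update W i B) g := by
  by_contra! hfail
  obtain ⟨I, hiI, hI⟩ := h.exists_of_not_update hfail.1
  obtain ⟨J, hiJ, hJ⟩ := h.exists_of_not_update hfail.2
  have : FiniteDimensional K A := Submodule.finiteDimensional_of_le (hAB ▸ le_sup_left)
  have : FiniteDimensional K B := Submodule.finiteDimensional_of_le (hAB ▸ le_sup_right)
  set P := A ⊔ ⨆ j ∈ I, W j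
  set Q := B ⊔ ⨆ j ∈ J, W j
  have hunion : ⨆ j ∈ insert i (I ∪ J), W j = P ⊔ Q := by
    rw [Finset.iSup_insert, Finset.iSup_union, ← hAB, sup_sup_sup_comm]
  have hinter : ⨆ j ∈ I ∩ J, W j ≤ P ⊓ Q :=
    le_inf (le_sup_of_le_right (biSup_mono fun _ => mem_of_mem_inter_left))
      (le_sup_of_le_right (biSup_mono fun _ => mem_of_mem_inter_right))
  have hcard : #(insert i (I ∪ J)) + #(I ∩ J) = #I + #J + 1 := by
    rw [card_insert_of_notMem (by simp [hiI, hiJ]), add_right_comm, card_union_add_card_inter]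
  have hsubmod : finrank K ↥(⨆ j ∈ insert i (I ∪ J), W j) + finrank K ↥(⨆ j ∈ I ∩ J, W j) ≤
      finrank K P + finrank K Q := by
    rw [hunion, ← Submodule.finrank_sup_add_finrank_inf_eq P Q]
    gcongr
    exact Submodule.finrank_mono hinter
  have hunion_le := h (insert i (I ∪ J))
  have hinter_le := h (I ∩ J)
  lia

theorem KonigCondition.hasIndependentReps {W : ι → Submodule K V}
    [∀ i, FiniteDimensional K (W i)] {g : ℕ} (h : KonigCondition W g) :
    HasIndependentReps W g := by
  classical
  induction hn : ∑ i, finrank K (W i) using Nat.strong_induction_on generalizing W with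
  | _ n ih =>
  by_cases hW : ∀ i, (W i).IsPrincipal
  · exact h.hasIndependentReps_of_isPrincipal hW
  obtain ⟨i, hi⟩ := not_forall.1 hW
  obtain ⟨A, B, hAB, hA, hB⟩ := exists_sup_eq_of_not_isPrincipal hi
  have shrink {U : Submodule K V} (hU : U < W i)
      (hupdate : KonigCondition (Function.update W i U) g) : HasIndependentReps W g := by
    have hle : Function.update W i U ≤ W := update_le_self_iff.2 hU.le
    have (j : ι) : FiniteDimensional K (Function.update W i U j) :=
      Submodule.finiteDimensional_of_le (hle j)
    exact (ih _ (hn ▸ sum_finrank_update_lt hU) hupdate rfl).mono hle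
  exact (h.update_or_update hAB).elim (shrink hA) (shrink hB)

theorem HasIndependentReps.konigCondition {W : ι → Submodule K V}
    [∀ i, FiniteDimensional K (W i)] {g : ℕ} (h : HasIndependentReps W g) :
    KonigCondition W g := by
  classical
  obtain ⟨s, v, rfl, hv, hli⟩ := h
  intro I
  have hinter : #(s ∩ I) ≤ finrank K ↥(⨆ i ∈ I, W i) :=
    card_le_finrank_of_linearIndepOn (hli.mono (coe_subset.2 inter_subset_left)) fun i hi =>
      le_biSup W (mem_of_mem_inter_right hi) (hv i (mem_of_mem_inter_left hi))
  have hunion : #(s ∪ I) ≤ Fintype.card ι := card_le_univ _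
  calc #s + #I = #(s ∩ I) + #(s ∪ I) := (card_inter_add_card_union s I).symm
    _ ≤ finrank K ↥(⨆ i ∈ I, W i) + Fintype.card ι := add_le_add hinter hunion

theorem vectorSpace_konig_general (W : ι → Submodule K V) [∀ i, FiniteDimensional K (W i)] :
    IsGreatest {g : ℕ | HasIndependentReps W g}
      (univ.inf' univ_nonempty
        fun I : Finset ι => finrank K ↥(⨆ i ∈ I, W i) + (Fintype.card ι - #I)) := by
  have hiff (g : ℕ) : HasIndependentReps W g ↔ g ≤ univ.inf' univ_nonempty
      fun I : Finset ι => finrank K ↥(⨆ i ∈ I, W i) + (Fintype.card ι - #I) :=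
    ⟨fun h => konigCondition_iff_le_inf'.1 h.konigCondition,
      fun h => (konigCondition_iff_le_inf'.2 h).hasIndependentReps⟩
  exact ⟨(hiff _).2 le_rfl, fun g hg => (hiff g).1 hg⟩

end DivisionRing

/-- Vector-space (linearized) version of König's theorem: the maximum number of
linearly independent vectors choosable from distinct subspaces `V i` equals
`min over I of (dim (∑_{i ∈ I} V i) + r - |I|)`. -/
theorem vectorSpace_konig {F V : Type*} [Field F] [AddCommGroup V] [Module F V]
    [FiniteDimensional F V] (r : ℕ) (Vs : Fin r → Submodule F V) :
    IsGreatest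
      {g : ℕ | ∃ (s : Finset (Fin r)) (v : Fin r → V), s.card = g ∧
        (∀ i ∈ s, v i ∈ Vs i) ∧ LinearIndependent F (fun i : s => v i)}
      (Finset.univ.inf' Finset.univ_nonempty
        (fun I : Finset (Fin r) =>
          Module.finrank F ↥(⨆ i ∈ I, Vs i) + (r - I.card))) := by
  have h := vectorSpace_konig_general Vs
  rwa [Fintype.card_fin] at h
end

section
/- Let $E = \mathcal{O}^n \subseteq \mathcal{K}^n$ be the standard lattice, where $\mathcal{O} = F[[t]]$, and let $L, M, N$ be lattices with $E \subseteq L, M, N \subseteq t^{-1}E$. Let $U_1, U_2, U_3 \subseteq V := t^{-1}E/E \cong F^n$ be the images of $L, M, N$. Then for $i+j+k = n$, $f^t_{ijk}(L,M,N)$ equals the maximum number of linearly independent vectors in $V$ that can be chosen using at most $i$ vectors from $U_1$, at most $j$ from $U_2$, and at most $k$ from $U_3$. -/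
noncomputable section

/-- A lattice in `K^n`, `K = F((t))`: a finitely generated `F[[t]]`-submodule
of full rank (it spans `K^n` over `K`). -/
def IsLattice {F : Type*} [Field F] {n : ℕ}
    (L : Submodule (PowerSeries F) (Fin n → LaurentSeries F)) : Prop :=
  L.FG ∧ Submodule.span (LaurentSeries F) (L : Set (Fin n → LaurentSeries F)) = ⊤

/-- The set of values `-val (det (v 0, …, v (n-1)))` over nonzero determinants of
vectors `v m` chosen from the lattices `X m` (column `m` from lattice `X m`). -/
def detValSet {F : Type*} [Field F] {n : ℕ}
    (X : Fin n → Submodule (PowerSeries F) (Fin n → LaurentSeries F)) : Set ℤ :=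
  {z | ∃ v : Fin n → Fin n → LaurentSeries F, (∀ m, v m ∈ X m) ∧
    (Matrix.of fun p m => v m p).det ≠ 0 ∧
    z = -((Matrix.of fun p m => v m p).det).order}

/-- Column pattern for two lattices: the first `i` columns from `X`, the rest
from `Y`; `detValSet (cols2 X Y i)` computes `fᵗ_{i,n-i}(X,Y)`. -/
def cols2 {F : Type*} [Field F] {n : ℕ}
    (X Y : Submodule (PowerSeries F) (Fin n → LaurentSeries F)) (i : ℕ) :
    Fin n → Submodule (PowerSeries F) (Fin n → LaurentSeries F) :=
  fun m => if (m : ℕ) < i then X else Y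

/-- Column pattern for three lattices: first `i` columns from `X`, next `j`
from `Y`, remaining from `Z`; `detValSet (cols3 X Y Z i j)` computes
`fᵗ_{i,j,k}(X,Y,Z)` for `k = n - i - j`. -/
def cols3 {F : Type*} [Field F] {n : ℕ}
    (X Y Z : Submodule (PowerSeries F) (Fin n → LaurentSeries F)) (i j : ℕ) :
    Fin n → Submodule (PowerSeries F) (Fin n → LaurentSeries F) :=
  fun m => if (m : ℕ) < i then X else if (m : ℕ) < i + j then Y else Z

/-- The standard lattice `O^n = ⟨e 0, …, e (n-1)⟩`. -/
def stdLattice (F : Type*) [Field F] (n : ℕ) :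
    Submodule (PowerSeries F) (Fin n → LaurentSeries F) :=
  Submodule.span (PowerSeries F)
    (Set.range fun i => Pi.single i (1 : LaurentSeries F))

/-- The lattice `t⁻¹E = ⟨t⁻¹ e 0, …, t⁻¹ e (n-1)⟩`. -/
def tInvStdLattice (F : Type*) [Field F] (n : ℕ) :
    Submodule (PowerSeries F) (Fin n → LaurentSeries F) :=
  Submodule.span (PowerSeries F)
    (Set.range fun i => Pi.single i (HahnSeries.single (-1) (1 : F)))

/-- The set of numbers `g` such that one can choose `g` linearly independent
vectors with at most `i` from `U₁`, `j` from `U₂`, `k` from `U₃`. -/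
def indepChoiceSet {F V : Type*} [Field F] [AddCommGroup V] [Module F V]
    (U₁ U₂ U₃ : Submodule F V) (i j k : ℕ) : Set ℕ :=
  {g | ∃ (v : Fin g → V) (c : Fin g → Fin 3),
    (∀ a, c a = 0 → v a ∈ U₁) ∧ (∀ a, c a = 1 → v a ∈ U₂) ∧
    (∀ a, c a = 2 → v a ∈ U₃) ∧
    (Finset.univ.filter fun a => c a = 0).card ≤ i ∧
    (Finset.univ.filter fun a => c a = 1).card ≤ j ∧
    (Finset.univ.filter fun a => c a = 2).card ≤ k ∧
    LinearIndependent F v}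

/-!
Write vectors of `t⁻¹E` as `t⁻¹ A m` with `A m` a row of power series. Their determinant is
`t⁻ⁿ det A`, and expanding `det A` multilinearly along `A = A(0) + t B` kills every term with more
than `rank A(0)` rows from `A(0)`, so `t ^ (n - rank A(0))` divides `det A`. Hence `-val` is at most
`rank A(0)`, which is the size of an independent set of rows of `A(0)`; since each lattice contains
`E`, these rows lie in the given subspaces. Conversely, extend `g` independent vectors to a basis of
`Fⁿ` and multiply only the chosen ones by `t⁻¹`: the remaining ones lie in `E`, hence in every
lattice, and the determinant has valuation `-g`.
-/

open scoped PowerSeries LaurentSeries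

/-- The numbers `g` such that one can choose `g` linearly independent vectors from members of the
family `U` with pairwise distinct indices: the ranks of the partial transversals of `U`. -/
def indepTransversalSet {F V ι : Type*} [Field F] [AddCommGroup V] [Module F V]
    (U : ι → Submodule F V) : Set ℕ :=
  {g | ∃ (σ : Fin g ↪ ι) (v : Fin g → V), (∀ a, v a ∈ U (σ a)) ∧ LinearIndependent F v}

theorem exists_embedding_of_card_fiber_le {α β γ : Type*} [Fintype α] [Fintype β] [DecidableEq γ]
    (c : α → γ) (d : β → γ)
    (h : ∀ x, (Finset.univ.filter fun a ↦ c a = x).card ≤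
      (Finset.univ.filter fun b ↦ d b = x).card) :
    ∃ σ : α ↪ β, ∀ a, d (σ a) = c a := by
  have fiber_embedding (x : γ) : Nonempty ({a // c a = x} ↪ {b // d b = x}) :=
    Function.Embedding.nonempty_of_card_le (by simpa only [Fintype.card_subtype] using h x)
  let ψ (x : γ) := (fiber_embedding x).some
  exact ⟨(Equiv.sigmaFiberEquiv c).symm.toEmbedding.trans
    ((Function.Embedding.sigmaMap (.refl γ) ψ).trans (Equiv.sigmaFiberEquiv d).toEmbedding),
    fun a ↦ (ψ (c a) ⟨a, rfl⟩).2⟩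

theorem exists_linearIndependent_extend {F V κ ι : Type*} [DivisionRing F] [AddCommGroup V]
    [Module F V] [FiniteDimensional F V] [Finite κ] [Fintype ι] {v : κ → V}
    (hv : LinearIndependent F v) (σ : κ ↪ ι)
    (hcard : Fintype.card ι = Module.finrank F V) :
    ∃ w : ι → V, LinearIndependent F w ∧ ∀ a, w (σ a) = v a := by
  classical
  have := Fintype.ofFinite κ
  obtain ⟨W, hW⟩ := (Submodule.span F (Set.range v)).exists_isCompl
  let e : κ ⊕ ↥(Set.range σ)ᶜ ≃ ι :=
    (Equiv.sumCongr (Equiv.ofInjective σ σ.injective) (.refl _)).trans (Equiv.Set.sumCompl _)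
  have hrank : Module.finrank F W = Fintype.card ↥(Set.range σ)ᶜ := by
    have hdim := Submodule.finrank_add_eq_of_isCompl hW
    rw [finrank_span_eq_card hv, ← hcard, ← Fintype.card_congr e, Fintype.card_sum] at hdim
    exact Nat.add_left_cancel hdim
  let b := (Module.finBasisOfFinrankEq F W hrank).reindex (Fintype.equivFin _).symm
  have hbW : Submodule.span F (Set.range (W.subtype ∘ b)) ≤ W :=
    Submodule.span_le.2 (Set.range_subset_iff.2 fun x ↦ (b x).2)
  have hsum : LinearIndependent F (Sum.elim v (W.subtype ∘ b)) :=
    hv.sum_type (b.linearIndependent.map' W.subtype W.ker_subtype) (hW.disjoint.mono_right hbW)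
  refine ⟨Sum.elim v (W.subtype ∘ b) ∘ e.symm, hsum.comp _ e.symm.injective, fun a ↦ ?_⟩
  have he : e.symm (σ a) = Sum.inl a := e.symm_apply_eq.2 rfl
  rw [Function.comp_apply, he, Sum.elim_inl]

theorem exists_embedding_linearIndependent_rows {F ι κ : Type*} [Field F] [Finite ι] [Fintype κ]
    (A : Matrix ι κ F) : ∃ σ : Fin A.rank ↪ ι, LinearIndependent F fun a ↦ A (σ a) := by
  obtain ⟨τ, f, hf, hspan, hli⟩ := exists_linearIndependent' F A.row
  have : Finite τ := Finite.of_injective f hf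
  have : Fintype τ := Fintype.ofFinite τ
  have hcard : Fintype.card (Fin A.rank) = Fintype.card τ := by
    rw [Fintype.card_fin, A.rank_eq_finrank_span_row, ← hspan, finrank_span_eq_card hli]
  let e := Fintype.equivOfCardEq hcard
  exact ⟨e.toEmbedding.trans ⟨f, hf⟩, hli.comp e e.injective⟩

theorem pow_dvd_alternatingMap_add_smul {R M ι : Type*} [CommRing R] [IsDomain R] [AddCommGroup M]
    [Module R M] [Fintype ι] (f : M [⋀^ι]→ₗ[R] R) (v w : ι → M) (x : R) {r : ℕ}
    (hr : ∀ S : Finset ι, LinearIndepOn R v S → S.card ≤ r) :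
    x ^ (Fintype.card ι - r) ∣ f (v + x • w) := by
  classical
  rw [f.map_add_univ]
  refine Finset.dvd_sum fun S _ ↦ ?_
  by_cases hS : S.card ≤ r
  · have hsmul : S.piecewise v (x • w) =
        Sᶜ.piecewise (fun m ↦ x • S.piecewise v w m) (S.piecewise v w) := by
      rw [Finset.piecewise_compl]
      funext m
      by_cases hm : m ∈ S <;> simp [hm]
    have hf : f (S.piecewise v (x • w)) =
        x ^ (Fintype.card ι - S.card) * f (S.piecewise v w) := by
      rw [hsmul, ← Finset.card_compl, ← Finset.prod_const]
      exact f.toMultilinearMap.map_piecewise_smul (fun _ ↦ x) _ Sᶜ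
    rw [hf]
    exact (pow_dvd_pow x (Nat.sub_le_sub_left hS _)).mul_right _
  · rw [f.map_linearDependent _ fun hli ↦ hS (hr S ?_)]
    · exact dvd_zero _
    · have hres : S.piecewise v (x • w) ∘ ((↑) : S → ι) = fun m : S ↦ v m :=
        funext fun m ↦ Finset.piecewise_eq_of_mem _ _ _ m.2
      have hcomp := hli.comp ((↑) : S → ι) Subtype.val_injective
      rw [hres] at hcomp
      exact hcomp

theorem linearIndepOn_row_of_map_C {R ι κ : Type*} [CommRing R] {A : Matrix ι κ R} {S : Set ι}
    (h : LinearIndepOn R⟦X⟧ (A.map (PowerSeries.C (R := R))).row S) : LinearIndepOn R A.row S :=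
  have : FaithfulSMul R R⟦X⟧ :=
    (faithfulSMul_iff_algebraMap_injective R R⟦X⟧).2 PowerSeries.C_injective
  (h.restrict_scalars' R).of_comp ((Algebra.linearMap R R⟦X⟧).compLeft κ)

theorem X_pow_card_sub_rank_dvd_det {F ι : Type*} [Field F] [Fintype ι] [DecidableEq ι]
    (A : Matrix ι ι F⟦X⟧) :
    PowerSeries.X ^ (Fintype.card ι - (A.map PowerSeries.constantCoeff).rank) ∣ A.det := by
  set A₀ := A.map (PowerSeries.constantCoeff (R := F))
  have hA : A = A₀.map (PowerSeries.C (R := F)) + (PowerSeries.X : F⟦X⟧) •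
      A.map fun a ↦ PowerSeries.mk fun q ↦ PowerSeries.coeff (q + 1) a := by
    ext1 m p
    exact (PowerSeries.eq_X_mul_shift_add_const (A m p)).trans (add_comm _ _)
  rw [hA]
  refine pow_dvd_alternatingMap_add_smul (M := ι → F⟦X⟧) Matrix.detRowAlternating
    _ _ _ fun S hS ↦ ?_
  have hS₀ : LinearIndependent F (A₀.submatrix ((↑) : S → ι) id).row :=
    linearIndepOn_row_of_map_C hS
  simpa only [hS₀.rank_matrix, Fintype.card_coe] using
    A₀.rank_submatrix_le ((↑) : S → ι) id

theorem le_order_coe_of_X_pow_dvd {R : Type*} [Semiring R] {f : R⟦X⟧} {k : ℕ}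
    (hdvd : PowerSeries.X ^ k ∣ f) (hf : (f : R⸨X⸩) ≠ 0) : (k : ℤ) ≤ (f : R⸨X⸩).order := by
  rw [HahnSeries.le_order_iff_forall hf]
  intro q hq
  rw [PowerSeries.coeff_coe]
  split_ifs with h
  · rfl
  · exact PowerSeries.X_pow_dvd_iff.1 hdvd _ (by omega)

theorem neg_order_det_tInv_smul_le_rank {F ι : Type*} [Field F] [Fintype ι] [DecidableEq ι]
    (A : Matrix ι ι F⟦X⟧)
    (hdet : ((HahnSeries.single (-1) 1 : F⸨X⸩) • A.map (algebraMap F⟦X⟧ F⸨X⸩)).det ≠ 0) :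
    -((HahnSeries.single (-1) 1 : F⸨X⸩) • A.map (algebraMap F⟦X⟧ F⸨X⸩)).det.order ≤
      (A.map PowerSeries.constantCoeff).rank := by
  have hsmul : ((HahnSeries.single (-1) 1 : F⸨X⸩) • A.map (algebraMap F⟦X⟧ F⸨X⸩)).det =
      HahnSeries.single (-1) 1 ^ Fintype.card ι * (A.det : F⸨X⸩) := by
    rw [Matrix.det_smul, ← LaurentSeries.coe_algebraMap, RingHom.map_det, RingHom.mapMatrix_apply]
  rw [hsmul] at hdet ⊢
  have hle := le_order_coe_of_X_pow_dvd (X_pow_card_sub_rank_dvd_det A) (right_ne_zero_of_mul hdet)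
  rw [HahnSeries.order_mul (left_ne_zero_of_mul hdet) (right_ne_zero_of_mul hdet),
    HahnSeries.order_pow, HahnSeries.order_single one_ne_zero, nsmul_eq_mul]
  omega

theorem det_diagonal_tInv_mul_map_C {R ι : Type*} [CommRing R] [Fintype ι] [DecidableEq ι]
    (S : Finset ι) (B : Matrix ι ι R) :
    (Matrix.diagonal (fun m ↦ if m ∈ S then (HahnSeries.single (-1) 1 : R⸨X⸩) else 1) *
      B.map HahnSeries.C).det = HahnSeries.single (-(S.card : ℤ)) B.det := by
  have hB : (B.map (HahnSeries.C (Γ := ℤ) (R := R))).det = HahnSeries.C B.det :=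
    (RingHom.map_det _ _).symm
  rw [Matrix.det_mul, Matrix.det_diagonal, hB]
  simp [Finset.prod_ite_mem, HahnSeries.C_apply]

section Lattice

variable {F : Type*} [Field F] {n : ℕ}

theorem coe_mem_stdLattice (a : Fin n → F⟦X⟧) :
    (fun p ↦ algebraMap F⟦X⟧ F⸨X⸩ (a p)) ∈ stdLattice F n := by
  refine (Submodule.mem_span_range_iff_exists_fun _).2 ⟨a, ?_⟩
  funext p
  simp [Finset.sum_apply, Pi.single_apply, Algebra.smul_def]

theorem exists_of_mem_tInvStdLattice {x : Fin n → F⸨X⸩}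
    (hx : x ∈ tInvStdLattice F n) : ∃ a : Fin n → F⟦X⟧,
      ∀ p, x p = HahnSeries.single (-1) 1 * algebraMap F⟦X⟧ F⸨X⸩ (a p) := by
  obtain ⟨a, rfl⟩ := (Submodule.mem_span_range_iff_exists_fun _).1 hx
  refine ⟨a, fun p ↦ ?_⟩
  simp [Finset.sum_apply, Pi.single_apply, Algebra.smul_def, mul_comm]

theorem single_neg_one_constantCoeff {R : Type*} [CommRing R] (a : R⟦X⟧) :
    (HahnSeries.single (-1) (PowerSeries.constantCoeff a) : R⸨X⸩) =
      HahnSeries.single (-1) 1 * algebraMap R⟦X⟧ R⸨X⸩ a -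
        algebraMap R⟦X⟧ R⸨X⸩ (PowerSeries.mk fun q ↦ PowerSeries.coeff (q + 1) a) := by
  set b : R⟦X⟧ := PowerSeries.mk fun q ↦ PowerSeries.coeff (q + 1) a
  have ha : algebraMap R⟦X⟧ R⸨X⸩ a = HahnSeries.single 1 1 * algebraMap R⟦X⟧ R⸨X⸩ b +
      HahnSeries.single 0 (PowerSeries.constantCoeff a) := by
    simpa only [LaurentSeries.coe_algebraMap, map_add, map_mul, HahnSeries.ofPowerSeries_X,
      HahnSeries.ofPowerSeries_C, HahnSeries.C_apply] using
      congrArg (algebraMap R⟦X⟧ R⸨X⸩) (PowerSeries.eq_X_mul_shift_add_const a)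
  rw [ha, mul_add, ← mul_assoc, HahnSeries.single_mul_single, HahnSeries.single_mul_single]
  simp

theorem single_constantCoeff_mem {L : Submodule F⟦X⟧ (Fin n → F⸨X⸩)} (hE : stdLattice F n ≤ L)
    {a : Fin n → F⟦X⟧}
    (ha : (fun p ↦ HahnSeries.single (-1) 1 * algebraMap F⟦X⟧ F⸨X⸩ (a p)) ∈ L) :
    (fun p ↦ (HahnSeries.single (-1) (PowerSeries.constantCoeff (a p)) : F⸨X⸩)) ∈ L := by
  simp only [single_neg_one_constantCoeff]
  exact L.sub_mem ha (hE (coe_mem_stdLattice _))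

theorem mem_detValSet_iff {X : Fin n → Submodule F⟦X⟧ (Fin n → F⸨X⸩)} {z : ℤ} :
    z ∈ detValSet X ↔ ∃ A : Matrix (Fin n) (Fin n) F⸨X⸩,
      (∀ m, A m ∈ X m) ∧ A.det ≠ 0 ∧ z = -A.det.order := by
  have hdet (v : Fin n → Fin n → F⸨X⸩) : (Matrix.of fun p m ↦ v m p).det = (Matrix.of v).det :=
    Matrix.det_transpose (Matrix.of v)
  exact exists_congr fun v ↦ by rw [hdet]; rfl

theorem natCast_mem_detValSet {X : Fin n → Submodule F⟦X⟧ (Fin n → F⸨X⸩)}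
    (hE : ∀ m, stdLattice F n ≤ X m) {U : Fin n → Submodule F (Fin n → F)}
    (hUX : ∀ m, ∀ u ∈ U m, (fun p ↦ (HahnSeries.single (-1) (u p) : F⸨X⸩)) ∈ X m)
    {g : ℕ} (hg : g ∈ indepTransversalSet U) : (g : ℤ) ∈ detValSet X := by
  obtain ⟨σ, v, hvU, hv⟩ := hg
  obtain ⟨B, hB, hBσ⟩ := exists_linearIndependent_extend hv σ (by simp)
  have hdetB : (Matrix.of B).det ≠ 0 :=
    ((Matrix.isUnit_iff_isUnit_det _).1 (Matrix.linearIndependent_rows_iff_isUnit.1 hB)).ne_zero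
  have hdet := det_diagonal_tInv_mul_map_C (Finset.univ.map σ) (Matrix.of B)
  rw [Finset.card_map, Finset.card_fin] at hdet
  refine mem_detValSet_iff.2 ⟨_, fun m ↦ ?_, hdet ▸ HahnSeries.single_ne_zero hdetB, by
    rw [hdet, HahnSeries.order_single hdetB, neg_neg]⟩
  by_cases hm : m ∈ Finset.univ.map σ
  · obtain ⟨a, -, rfl⟩ := Finset.mem_map.1 hm
    convert hUX (σ a) (v a) (hvU a) using 1
    funext p
    simp [HahnSeries.C_apply, hBσ]
  · convert hE m (coe_mem_stdLattice fun p ↦ PowerSeries.C (B m p)) using 1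
    funext p
    rw [Matrix.diagonal_mul, if_neg hm]
    simp [LaurentSeries.coe_algebraMap]

theorem exists_mem_indepTransversalSet_ge {X : Fin n → Submodule F⟦X⟧ (Fin n → F⸨X⸩)}
    (hE : ∀ m, stdLattice F n ≤ X m) (hT : ∀ m, X m ≤ tInvStdLattice F n)
    {U : Fin n → Submodule F (Fin n → F)}
    (hXU : ∀ m u, (fun p ↦ (HahnSeries.single (-1) (u p) : F⸨X⸩)) ∈ X m → u ∈ U m)
    {z : ℤ} (hz : z ∈ detValSet X) : ∃ g ∈ indepTransversalSet U, z ≤ g := by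
  obtain ⟨v, hvX, hdet, rfl⟩ := mem_detValSet_iff.1 hz
  choose A hA using fun m ↦ exists_of_mem_tInvStdLattice (hT m (hvX m))
  have hv : v = (HahnSeries.single (-1) 1 : F⸨X⸩) • (Matrix.of A).map (algebraMap F⟦X⟧ F⸨X⸩) :=
    Matrix.ext hA
  have hres (m) : (fun p ↦ PowerSeries.constantCoeff (A m p)) ∈ U m :=
    hXU m _ (single_constantCoeff_mem (hE m) (funext (hA m) ▸ hvX m))
  obtain ⟨σ, hσ⟩ := exists_embedding_linearIndependent_rows
    ((Matrix.of A).map PowerSeries.constantCoeff)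
  subst hv
  exact ⟨_, ⟨σ, _, fun a ↦ hres (σ a), hσ⟩, neg_order_det_tInv_smul_le_rank _ hdet⟩

theorem triple_val_of_close_lattices_general (X : Fin n → Submodule F⟦X⟧ (Fin n → F⸨X⸩))
    (hE : ∀ m, stdLattice F n ≤ X m) (hT : ∀ m, X m ≤ tInvStdLattice F n)
    (U : Fin n → Submodule F (Fin n → F))
    (hU : ∀ m u, u ∈ U m ↔ (fun p ↦ (HahnSeries.single (-1) (u p) : F⸨X⸩)) ∈ X m)
    (g : ℕ) (hg : IsGreatest (indepTransversalSet U) g) :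
    IsGreatest (detValSet X) (g : ℤ) := by
  refine ⟨natCast_mem_detValSet hE (fun m u ↦ (hU m u).1) hg.1, fun z hz ↦ ?_⟩
  obtain ⟨r, hr, hzr⟩ := exists_mem_indepTransversalSet_ge hE hT (fun m u ↦ (hU m u).2) hz
  exact hzr.trans (Int.ofNat_le.2 (hg.2 hr))

end Lattice

/-- The block of column `m` when the columns are divided into three consecutive blocks, the first
of length `i` and the second of length `j`, as in `cols3`. -/
def block3 {n : ℕ} (i j : ℕ) (m : Fin n) : Fin 3 :=
  if (m : ℕ) < i then 0 else if (m : ℕ) < i + j then 1 else 2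

theorem cols3_eq_block3 {F : Type*} [Field F] {n : ℕ}
    (L M N : Submodule F⟦X⟧ (Fin n → F⸨X⸩)) (i j : ℕ) :
    cols3 L M N i j = fun m ↦ ![L, M, N] (block3 i j m) := by
  funext m
  unfold cols3 block3
  split_ifs <;> rfl

theorem card_filter_block3 {n i j k : ℕ} (h : i + j + k = n) (x : Fin 3) :
    (Finset.univ.filter fun m : Fin n ↦ block3 i j m = x).card = ![i, j, k] x := by
  subst h
  have first_block (a : Fin i) : block3 i j ((a.castAdd j).castAdd k) = 0 := by simp [block3]
  have second_block (a : Fin j) : block3 i j ((a.natAdd i).castAdd k) = 1 := by simp [block3]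
  have third_block (a : Fin k) : block3 i j (a.natAdd (i + j)) = 2 := by
    simp [block3, Nat.add_assoc]
  simp only [Finset.card_filter, Fin.sum_univ_add, first_block, second_block, third_block]
  fin_cases x <;> simp

theorem mem_indepChoiceSet_iff {F V : Type*} [Field F] [AddCommGroup V] [Module F V]
    {U₁ U₂ U₃ : Submodule F V} {i j k g : ℕ} :
    g ∈ indepChoiceSet U₁ U₂ U₃ i j k ↔ ∃ (v : Fin g → V) (c : Fin g → Fin 3),
      (∀ a, v a ∈ ![U₁, U₂, U₃] (c a)) ∧
      (∀ x, (Finset.univ.filter fun a ↦ c a = x).card ≤ ![i, j, k] x) ∧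
      LinearIndependent F v := by
  have hmem (v : Fin g → V) (c : Fin g → Fin 3) : (∀ a, v a ∈ ![U₁, U₂, U₃] (c a)) ↔
      ∀ x a, c a = x → v a ∈ ![U₁, U₂, U₃] x :=
    ⟨fun h x a hx ↦ hx ▸ h a, fun h a ↦ h _ a rfl⟩
  simp [indepChoiceSet, hmem, Fin.forall_fin_succ, and_assoc]

theorem indepChoiceSet_eq_indepTransversalSet {F V : Type*} [Field F] [AddCommGroup V] [Module F V]
    (U₁ U₂ U₃ : Submodule F V) {n i j k : ℕ} (h : i + j + k = n) :
    indepChoiceSet U₁ U₂ U₃ i j k =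
      indepTransversalSet fun m : Fin n ↦ ![U₁, U₂, U₃] (block3 i j m) := by
  ext g
  rw [mem_indepChoiceSet_iff]
  simp only [← card_filter_block3 h]
  constructor
  · rintro ⟨v, c, hvU, hcard, hv⟩
    obtain ⟨σ, hσ⟩ := exists_embedding_of_card_fiber_le c (block3 i j) hcard
    exact ⟨σ, v, fun a ↦ by simpa only [hσ] using hvU a, hv⟩
  · rintro ⟨σ, v, hvU, hv⟩
    refine ⟨v, block3 i j ∘ σ, hvU, fun x ↦ ?_, hv⟩
    exact Finset.card_le_card_of_injOn σ (fun a ha ↦ by simpa using ha) σ.injective.injOn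

/-- For lattices `E ⊆ L, M, N ⊆ t⁻¹E` with images `U₁, U₂, U₃ ⊆ t⁻¹E/E ≅ F^n`
(a class `u ∈ F^n` lies in the image of `L` iff the vector `(t⁻¹ u_i)_i` lies in
`L`), `fᵗ_{ijk}(L,M,N)` equals the maximal number of linearly independent vectors
choosable with at most `i` from `U₁`, `j` from `U₂`, `k` from `U₃`. -/
theorem triple_val_of_close_lattices {F : Type*} [Field F] {n : ℕ} (i j k : ℕ)
    (hijk : i + j + k = n)
    (L M N : Submodule (PowerSeries F) (Fin n → LaurentSeries F))
    (hEL : stdLattice F n ≤ L) (hEM : stdLattice F n ≤ M) (hEN : stdLattice F n ≤ N)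
    (hLt : L ≤ tInvStdLattice F n) (hMt : M ≤ tInvStdLattice F n)
    (hNt : N ≤ tInvStdLattice F n)
    (U₁ U₂ U₃ : Submodule F (Fin n → F))
    (hU₁ : ∀ u : Fin n → F, u ∈ U₁ ↔
      (fun p => (HahnSeries.single (-1) (u p) : LaurentSeries F)) ∈ L)
    (hU₂ : ∀ u : Fin n → F, u ∈ U₂ ↔
      (fun p => (HahnSeries.single (-1) (u p) : LaurentSeries F)) ∈ M)
    (hU₃ : ∀ u : Fin n → F, u ∈ U₃ ↔
      (fun p => (HahnSeries.single (-1) (u p) : LaurentSeries F)) ∈ N)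
    (g : ℕ) (hg : IsGreatest (indepChoiceSet U₁ U₂ U₃ i j k) g) :
    IsGreatest (detValSet (cols3 L M N i j)) (g : ℤ) := by
  rw [indepChoiceSet_eq_indepTransversalSet U₁ U₂ U₃ hijk] at hg
  rw [cols3_eq_block3]
  have hE : ∀ x, stdLattice F n ≤ ![L, M, N] x := by
    simp [Fin.forall_fin_succ, hEL, hEM, hEN]
  have hT : ∀ x, ![L, M, N] x ≤ tInvStdLattice F n := by
    simp [Fin.forall_fin_succ, hLt, hMt, hNt]
  have hU : ∀ x u, u ∈ ![U₁, U₂, U₃] x ↔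
      (fun p => (HahnSeries.single (-1) (u p) : LaurentSeries F)) ∈ ![L, M, N] x := by
    simp [Fin.forall_fin_succ, hU₁, hU₂, hU₃]
  exact triple_val_of_close_lattices_general _ (fun m ↦ hE (block3 i j m))
    (fun m ↦ hT (block3 i j m)) _ (fun m ↦ hU (block3 i j m)) g hg

end
end

section
/- Let $U_1, U_2, U_3$ be subspaces of an $n$-dimensional vector space $V$ over a field, and let $i,j,k \geq 0$ with $i+j+k=n$. Let $g$ be the maximum number of linearly independent vectors that may be chosen with at most $i$ from $U_1$, $j$ from $U_2$, and $k$ from $U_3$. Then $g = \min\{i+j+k,\; j+k+\dim U_1,\; i+k+\dim U_2,\; i+j+\dim U_3,\; k+\dim(U_1+U_2),\; j+\dim(U_1+U_3),\; i+\dim(U_2+U_3),\; \dim(U_1+U_2+U_3)\}$. -/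
/-!
This is a deficiency form of Rado's theorem on independent transversals: a finite family of
subspaces `A t` admits vectors `v t ∈ A t` of rank at least `m` as soon as
`m ≤ #Jᶜ + finrank (J.sup A)` for every set `J` of indices. Shrink the members of the family as
long as the inequalities survive. If `A t` is not spanned by a single vector, write it as a sum of
two proper subspaces `B` and `C`; replacing `A t` by `B` and by `C` cannot both break an
inequality, since submodularity of the dimension would combine the two violated inequalities into
a violated inequality for `A`. Once every `A t` is spanned by one vector, those vectors work, by
the inequality for the full index set.

To choose at most `w x` vectors from each `U x`, repeat `U x` exactly `w x` times: among the sets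
`J` of copies, the decisive ones consist of all the copies of the `U x` with `x` in a set `C`.
-/

open Finset Function Module

section Rado

variable {K V ι : Type*} [DivisionRing K] [AddCommGroup V] [Module K V]

theorem exists_lt_lt_sup_eq_of_not_isPrincipal {A : Submodule K V} (hA : ¬ A.IsPrincipal) :
    ∃ B < A, ∃ C < A, B ⊔ C = A := by
  have hA_ne_bot : A ≠ ⊥ := by
    rintro rfl
    exact hA inferInstance
  obtain ⟨x, hxA, hx⟩ := Submodule.exists_mem_ne_zero_of_ne_bot hA_ne_bot
  have hspan : K ∙ x ≤ A := (Submodule.span_singleton_le_iff_mem x A).2 hxA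
  obtain ⟨C, hdisjoint, hsup⟩ := IsModularLattice.exists_disjoint_and_sup_eq hspan
  refine ⟨K ∙ x, hspan.lt_of_ne ?_, C, (le_sup_right.trans_eq hsup).lt_of_ne ?_, hsup⟩
  · rintro rfl
    exact hA ⟨x, rfl⟩
  · rintro rfl
    exact hx (Submodule.disjoint_def.1 hdisjoint x (Submodule.mem_span_singleton_self x) hxA)

variable [Fintype ι] [DecidableEq ι] {A : ι → Submodule K V} {m : ℕ}

/-- Rado's condition for a family of subspaces to have vectors `v t ∈ A t` of rank at least `m`.
The deficiency is expressed by the number of indices outside `J`, so that it is the value of a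
cut, and there is no subtraction. -/
def RadoCondition (A : ι → Submodule K V) (m : ℕ) : Prop :=
  ∀ J : Finset ι, m ≤ #Jᶜ + finrank K ↥(J.sup A)

namespace RadoCondition

theorem exists_card_compl_add_finrank_le_of_not_update (hA : RadoCondition A m) {t : ι}
    {B : Submodule K V} (hB : ¬ RadoCondition (update A t B) m) :
    ∃ J : Finset ι, t ∉ J ∧ #Jᶜ + finrank K ↥(B ⊔ J.sup A) ≤ m := by
  have sup_update (J : Finset ι) (ht : t ∉ J) : J.sup (update A t B) = J.sup A :=
    sup_congr rfl fun s hs => update_of_ne (ne_of_mem_of_not_mem hs ht) B A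
  simp only [RadoCondition, not_forall, not_le] at hB
  obtain ⟨J, hJ⟩ := hB
  have ht : t ∈ J := by
    by_contra ht
    rw [sup_update J ht] at hJ
    exact (hA J).not_gt hJ
  refine ⟨J.erase t, notMem_erase t J, ?_⟩
  rw [← insert_erase ht, sup_insert, update_self, sup_update _ (notMem_erase t J),
    insert_erase ht] at hJ
  rw [compl_erase, card_insert_of_notMem (by simpa using ht)]
  lia

theorem update_or_update [∀ t, FiniteDimensional K (A t)] (hA : RadoCondition A m) {t : ι}
    {B C : Submodule K V} [FiniteDimensional K B] [FiniteDimensional K C] (hBC : B ⊔ C = A t) :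
    RadoCondition (update A t B) m ∨ RadoCondition (update A t C) m := by
  by_contra! ⟨hB, hC⟩
  obtain ⟨J, htJ, hJ⟩ := hA.exists_card_compl_add_finrank_le_of_not_update hB
  obtain ⟨L, htL, hL⟩ := hA.exists_card_compl_add_finrank_le_of_not_update hC
  have hsup : (B ⊔ J.sup A) ⊔ (C ⊔ L.sup A) = (insert t (J ∪ L)).sup A := by
    rw [sup_insert, sup_union, ← hBC, sup_sup_sup_comm]
  have hinf : (J ∩ L).sup A ≤ (B ⊔ J.sup A) ⊓ (C ⊔ L.sup A) :=
    le_inf (le_sup_of_le_right (sup_mono inter_subset_left))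
      (le_sup_of_le_right (sup_mono inter_subset_right))
  have hmodular := Submodule.finrank_sup_add_finrank_inf_eq (B ⊔ J.sup A) (C ⊔ L.sup A)
  rw [hsup] at hmodular
  have hinf_finrank := Submodule.finrank_mono hinf
  have hcard : #(insert t (J ∪ L))ᶜ + 1 + #(J ∩ L)ᶜ = #Jᶜ + #Lᶜ := by
    rw [compl_insert, card_erase_add_one (by simp [htJ, htL]), compl_union, compl_inter,
      card_inter_add_card_union]
  have hinsert := hA (insert t (J ∪ L))
  have hinter := hA (J ∩ L)
  lia

theorem exists_forall_mem_and_le_finrank_of_isPrincipal (hA : RadoCondition A m)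
    (hprincipal : ∀ t, (A t).IsPrincipal) :
    ∃ v : ι → V, (∀ t, v t ∈ A t) ∧ m ≤ (Set.range v).finrank K := by
  refine ⟨fun t => Submodule.IsPrincipal.generator (A t),
    fun t => Submodule.IsPrincipal.generator_mem (A t), ?_⟩
  have hspan : Submodule.span K (Set.range fun t => Submodule.IsPrincipal.generator (A t)) =
      univ.sup A := by
    simp only [Submodule.span_range_eq_iSup, Submodule.IsPrincipal.span_singleton_generator,
      sup_univ_eq_iSup]
  rw [Set.finrank, hspan]
  simpa using hA univ

theorem exists_forall_mem_and_le_finrank [∀ t, FiniteDimensional K (A t)]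
    (hA : RadoCondition A m) :
    ∃ v : ι → V, (∀ t, v t ∈ A t) ∧ m ≤ (Set.range v).finrank K := by
  induction hN : ∑ t, finrank K (A t) using Nat.strong_induction_on generalizing A with
  | _ N ih =>
  subst hN
  by_cases hprincipal : ∀ t, (A t).IsPrincipal
  · exact hA.exists_forall_mem_and_le_finrank_of_isPrincipal hprincipal
  obtain ⟨t, ht⟩ := not_forall.1 hprincipal
  have of_update {B : Submodule K V} (hB : B < A t) (hB_rado : RadoCondition (update A t B) m) :
      ∃ v : ι → V, (∀ t, v t ∈ A t) ∧ m ≤ (Set.range v).finrank K := by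
    have hle : update A t B ≤ A := update_le_self_iff.2 hB.le
    have (s : ι) : FiniteDimensional K (update A t B s) :=
      Submodule.finiteDimensional_of_le (hle s)
    have hlt : ∑ s, finrank K (update A t B s) < ∑ s, finrank K (A s) :=
      sum_lt_sum (fun s _ => Submodule.finrank_mono (hle s))
        ⟨t, mem_univ t, Submodule.finrank_lt_finrank_of_lt (by rwa [update_self])⟩
    obtain ⟨v, hv, hm⟩ := ih _ hlt hB_rado rfl
    exact ⟨v, fun s => hle s (hv s), hm⟩
  obtain ⟨B, hB, C, hC, hBC⟩ := exists_lt_lt_sup_eq_of_not_isPrincipal ht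
  have := Submodule.finiteDimensional_of_le hB.le
  have := Submodule.finiteDimensional_of_le hC.le
  exact (hA.update_or_update hBC).elim (of_update hB) (of_update hC)

end RadoCondition

end Rado

section Cut

variable {K V ι : Type*} [DivisionRing K] [AddCommGroup V] [Module K V] [DecidableEq ι]

/-- The sizes of the linearly independent families of vectors labeled by `ι` in which the vectors
labeled `x` belong to `U x` and number at most `w x`: the analogue of `indepChoiceSet` for an
arbitrary family of subspaces. -/
def labeledIndepSizes (U : ι → Submodule K V) (w : ι → ℕ) : Set ℕ :=
  {g | ∃ (v : Fin g → V) (c : Fin g → ι),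
    (∀ a, v a ∈ U (c a)) ∧ (∀ x, #{a | c a = x} ≤ w x) ∧ LinearIndependent K v}

variable [Fintype ι]

/-- The value of the cut determined by a set `C` of labels: the labels outside `C` contribute
their capacities, and those in `C` the dimension of the sum of their subspaces. -/
noncomputable def cutValue (U : ι → Submodule K V) (w : ι → ℕ) (C : Finset ι) : ℕ :=
  ∑ x ∈ Cᶜ, w x + finrank K ↥(C.sup U)

variable {U : ι → Submodule K V} {w : ι → ℕ} {m : ℕ}

theorem le_cutValue_of_mem_labeledIndepSizes [∀ x, FiniteDimensional K (U x)]
    (hm : m ∈ labeledIndepSizes U w) (C : Finset ι) : m ≤ cutValue U w C := by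
  obtain ⟨v, c, hv, hw, hli⟩ := hm
  have hinside : #{a | c a ∈ C} ≤ finrank K ↥(C.sup U) := by
    let u (a : {a // c a ∈ C}) : ↥(C.sup U) := ⟨v a, le_sup (f := U) a.2 (hv a)⟩
    have hu : LinearIndependent K u :=
      .of_comp (C.sup U).subtype (hli.comp Subtype.val Subtype.val_injective)
    simpa only [Fintype.card_subtype] using hu.fintype_card_le_finrank
  have houtside : #{a | c a ∉ C} ≤ ∑ x ∈ Cᶜ, w x :=
    calc #{a | c a ∉ C} = ∑ x ∈ Cᶜ, #{a ∈ {a | c a ∉ C} | c a = x} :=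
          card_eq_sum_card_fiberwise (by simp [Set.MapsTo])
      _ ≤ ∑ x ∈ Cᶜ, w x := sum_le_sum fun x _ =>
          (card_le_card (filter_subset_filter _ (subset_univ _))).trans (hw x)
  calc m = #{a | c a ∈ C} + #{a | c a ∉ C} := by
        rw [card_filter_add_card_filter_not, card_univ, Fintype.card_fin]
    _ ≤ cutValue U w C := by
        rw [cutValue]
        lia

theorem radoCondition_sigma_of_forall_le_cutValue (hm : ∀ C, m ≤ cutValue U w C) :
    RadoCondition (fun p : Σ x, Fin (w x) => U p.1) m := by
  intro J
  have hsub : ((J.image Sigma.fst)ᶜ.sigma fun _ => univ) ⊆ Jᶜ := by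
    intro p hp
    simp only [mem_sigma, mem_compl, mem_univ, and_true] at hp ⊢
    exact fun hpJ => hp (mem_image_of_mem _ hpJ)
  calc m ≤ ∑ x ∈ (J.image Sigma.fst)ᶜ, w x + finrank K ↥((J.image Sigma.fst).sup U) := hm _
    _ ≤ #Jᶜ + finrank K ↥(J.sup fun p => U p.1) := by
        rw [sup_image]
        gcongr
        · simpa using card_le_card hsub
        · rfl

theorem mem_labeledIndepSizes_of_forall_le_cutValue [∀ x, FiniteDimensional K (U x)]
    (hm : ∀ C, m ≤ cutValue U w C) : m ∈ labeledIndepSizes U w := by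
  obtain ⟨v, hv, hrank⟩ :=
    (radoCondition_sigma_of_forall_le_cutValue hm).exists_forall_mem_and_le_finrank
  have : FiniteDimensional K (Submodule.span K (Set.range v)) :=
    .span_of_finite K (Set.finite_range v)
  obtain ⟨f, hf, -, hli⟩ := Submodule.exists_fun_fin_finrank_span_eq K (Set.range v)
  choose p hp using hf
  have hli' : LinearIndependent K (v ∘ p ∘ Fin.castLE hrank) := by
    rw [← comp_assoc, show v ∘ p = f from funext hp]
    exact hli.comp _ (Fin.castLE_injective hrank)
  refine ⟨_, fun a => (p (Fin.castLE hrank a)).1, fun a => hv _, fun x => ?_, hli'⟩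
  calc #{a | (p (Fin.castLE hrank a)).1 = x}
      ≤ #(({x} : Finset ι).sigma fun x => (univ : Finset (Fin (w x)))) :=
        card_le_card_of_injOn (p ∘ Fin.castLE hrank) (by simp [Set.MapsTo])
          hli'.injective.of_comp.injOn
    _ = w x := by simp [card_sigma]

theorem isGreatest_labeledIndepSizes [∀ x, FiniteDimensional K (U x)] :
    IsGreatest (labeledIndepSizes U w) (⨅ C, cutValue U w C) :=
  ⟨mem_labeledIndepSizes_of_forall_le_cutValue fun C => ciInf_le (OrderBot.bddBelow _) C,
    fun _ hg => le_ciInf (le_cutValue_of_mem_labeledIndepSizes hg)⟩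

end Cut

theorem forall_finset_fin_three {p : Finset (Fin 3) → Prop} :
    (∀ C, p C) ↔ p ∅ ∧ p {0} ∧ p {1} ∧ p {2} ∧ p {0, 1} ∧ p {0, 2} ∧ p {1, 2} ∧ p {0, 1, 2} := by
  have hcases (C : Finset (Fin 3)) : C = ∅ ∨ C = {0} ∨ C = {1} ∨ C = {2} ∨ C = {0, 1} ∨
      C = {0, 2} ∨ C = {1, 2} ∨ C = {0, 1, 2} := by
    decide +revert
  refine ⟨fun h => by simp only [h, and_self], fun h C => ?_⟩
  rcases hcases C with rfl | rfl | rfl | rfl | rfl | rfl | rfl | rfl <;> tauto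

theorem iInf_cutValue_fin_three {K V : Type*} [DivisionRing K] [AddCommGroup V] [Module K V]
    (U : Fin 3 → Submodule K V) (w : Fin 3 → ℕ) :
    ⨅ C, cutValue U w C =
      min (w 0 + w 1 + w 2)
        (min (w 1 + w 2 + finrank K ↥(U 0))
          (min (w 0 + w 2 + finrank K ↥(U 1))
            (min (w 0 + w 1 + finrank K ↥(U 2))
              (min (w 2 + finrank K ↥(U 0 ⊔ U 1))
                (min (w 1 + finrank K ↥(U 0 ⊔ U 2))
                  (min (w 0 + finrank K ↥(U 1 ⊔ U 2))
                    (finrank K ↥(U 0 ⊔ U 1 ⊔ U 2)))))))) := by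
  refine eq_of_forall_le_iff fun m => ?_
  rw [le_ciInf_iff (OrderBot.bddBelow _), forall_finset_fin_three]
  simp only [le_min_iff, cutValue, compl_eq_univ_sdiff, ← filter_notMem_eq_sdiff, sum_filter,
    Fin.sum_univ_three]
  -- `simp` cannot rewrite the submodule inside `finrank`, as the instances depend on it.
  rw [sup_assoc]
  repeat rw [sup_insert]
  repeat rw [sup_singleton]
  rw [sup_empty, finrank_bot]
  simp

section ThreeSubspaces

variable {F V : Type*} [Field F] [AddCommGroup V] [Module F V]

theorem indepChoiceSet_eq_labeledIndepSizes (U : Fin 3 → Submodule F V) (w : Fin 3 → ℕ) :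
    indepChoiceSet (U 0) (U 1) (U 2) (w 0) (w 1) (w 2) = labeledIndepSizes U w := by
  have forall_mem_iff {g : ℕ} (v : Fin g → V) (c : Fin g → Fin 3) :
      (∀ a, v a ∈ U (c a)) ↔ ∀ x a, c a = x → v a ∈ U x := by
    rw [forall_comm]
    simp only [forall_eq']
  ext g
  simp [indepChoiceSet, labeledIndepSizes, forall_mem_iff, Fin.forall_fin_succ, and_assoc]

theorem indep_three_subspaces_min_cut_general (U₁ U₂ U₃ : Submodule F V)
    [FiniteDimensional F U₁] [FiniteDimensional F U₂] [FiniteDimensional F U₃] (i j k : ℕ) :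
    IsGreatest (indepChoiceSet U₁ U₂ U₃ i j k)
      (min (i + j + k)
        (min (j + k + finrank F ↥U₁)
          (min (i + k + finrank F ↥U₂)
            (min (i + j + finrank F ↥U₃)
              (min (k + finrank F ↥(U₁ ⊔ U₂))
                (min (j + finrank F ↥(U₁ ⊔ U₃))
                  (min (i + finrank F ↥(U₂ ⊔ U₃))
                    (finrank F ↥(U₁ ⊔ U₂ ⊔ U₃))))))))) := by
  obtain ⟨U, rfl, rfl, rfl⟩ : ∃ U : Fin 3 → Submodule F V, U 0 = U₁ ∧ U 1 = U₂ ∧ U 2 = U₃ :=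
    ⟨![U₁, U₂, U₃], rfl, rfl, rfl⟩
  obtain ⟨w, rfl, rfl, rfl⟩ : ∃ w : Fin 3 → ℕ, w 0 = i ∧ w 1 = j ∧ w 2 = k :=
    ⟨![i, j, k], rfl, rfl, rfl⟩
  have (x : Fin 3) : FiniteDimensional F (U x) := by
    fin_cases x <;> assumption
  rw [indepChoiceSet_eq_labeledIndepSizes, ← iInf_cutValue_fin_three]
  exact isGreatest_labeledIndepSizes

end ThreeSubspaces

/-- The maximum number of linearly independent vectors choosable with at most
`i` from `U₁`, `j` from `U₂` and `k` from `U₃` (in an `n`-dimensional space with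
`i+j+k = n`) is the minimum of the eight cut values. -/
theorem indep_three_subspaces_min_cut {F V : Type*} [Field F] [AddCommGroup V] [Module F V]
    [FiniteDimensional F V] (n i j k : ℕ) (hn : Module.finrank F V = n)
    (h : i + j + k = n) (U₁ U₂ U₃ : Submodule F V) :
    IsGreatest (indepChoiceSet U₁ U₂ U₃ i j k)
      (min (i + j + k)
        (min (j + k + Module.finrank F ↥U₁)
          (min (i + k + Module.finrank F ↥U₂)
            (min (i + j + Module.finrank F ↥U₃)
              (min (k + Module.finrank F ↥(U₁ ⊔ U₂))
                (min (j + Module.finrank F ↥(U₁ ⊔ U₃))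
                  (min (i + Module.finrank F ↥(U₂ ⊔ U₃))
                    (Module.finrank F ↥(U₁ ⊔ U₂ ⊔ U₃))))))))) :=
  indep_three_subspaces_min_cut_general U₁ U₂ U₃ i j k
end

section
/- Let $E \subseteq L, M, N \subseteq t^{-1}E$ be lattices in $\mathcal{K}^n$ where $E = F[[t]]^n$, and let $i+j+k=n$ with $i,j,k \geq 0$. Then there exists a lattice $P$ among $\{tE, L, M, N, L+M, L+N, M+N, L+M+N\}$ such that $f^t_{ijk}(L,M,N) = f^t_{i,j+k}(L,P) + f^t_{j,i+k}(M,P) + f^t_{k,i+j}(N,P) - 2f^t_n(P)$. -/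
noncomputable section

/-- The lattice `tE = ⟨t e 0, …, t e (n-1)⟩`. -/
def tStdLattice (F : Type*) [Field F] (n : ℕ) :
    Submodule (PowerSeries F) (Fin n → LaurentSeries F) :=
  Submodule.span (PowerSeries F)
    (Set.range fun i => Pi.single i (HahnSeries.single 1 (1 : F)))

/-!
Let `E ⊆ X ⊆ t⁻¹E` be lattices, one for each colour of the `n` columns. Up to a shift, the maximal
`-val det` is the maximal rank of the matrix of leading coefficients of the columns, because a
determinant whose leading matrix has corank `r` gains `r` powers of `t`, and conversely the columns
not needed for the rank may be replaced by any vectors of `E`. This is a question about the images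
`V_a` of the lattices `X_a` in `t⁻¹E / E ≅ F^n`, which Rado's theorem on independent transversals
answers: the maximum is `min_S (dim ∑_{a ∈ S} V_a + #{columns with colour not in S})`.

Choose `S` attaining this minimum, and put `P = ∑_{a ∈ S} X_a`, or `P = tE` if `S = ∅`. Rado's
theorem also evaluates the maximum for each pair `X_a, P`. If `S ≠ ∅`, comparing `S` with `∅`, `{a}`
and `S ∪ {a}` shows that it exceeds the maximum `dim ∑_{a ∈ S} V_a` for `P` alone by `0` if `a ∈ S`
and by the number of columns of colour `a` otherwise, and these excesses add up to the network
formula. If `S = ∅`, each `V_a` is large enough to supply all `k_a` columns of its colour, and the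
maxima are `2 k_a - n` for the pairs, `-n` for `tE` and `n = ∑ k_a` for the whole family.
-/

section LinearAlgebra

open Module
open scoped Finset

theorem pow_card_dvd_det_of_dvd_rows {R ι : Type*} [CommRing R] [Fintype ι] [DecidableEq ι]
    {x : R} {s : Finset ι} {A : Matrix ι ι R} (h : ∀ p ∈ s, ∀ m, x ∣ A p m) :
    x ^ #s ∣ A.det := by
  rw [Matrix.det_apply']
  refine Finset.dvd_sum fun σ _ ↦ Dvd.dvd.mul_left ?_ _
  rw [← Finset.card_map σ.symm.toEmbedding, ← Finset.prod_const]
  refine (Finset.prod_dvd_prod_of_dvd _ _ ?_).trans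
    (Finset.prod_dvd_prod_of_subset _ _ _ (Finset.subset_univ _))
  simpa using fun m hm ↦ h (σ m) hm m

theorem finset_sup_update_of_notMem {α ι : Type*} [SemilatticeSup α] [OrderBot α] [DecidableEq ι]
    {m : ι} {T : Finset ι} (hm : m ∉ T) (f : ι → α) (x : α) :
    T.sup (Function.update f m x) = T.sup f :=
  Finset.sup_congr rfl fun _ hi ↦ Function.update_of_ne (ne_of_mem_of_not_mem hi hm) _ _

variable {K E ι κ : Type*} [DivisionRing K] [AddCommGroup E] [Module K E]

theorem exists_linearIndependent_eqOn [Fintype ι] [FiniteDimensional K E]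
    (hι : Fintype.card ι = finrank K E) {s : Set ι} {w : ι → E} (hw : LinearIndepOn K w s) :
    ∃ u : ι → E, LinearIndependent K u ∧ Set.EqOn u w s := by
  let b := Basis.extend hw.id_image
  have : Fintype (hw.id_image.extend (Set.subset_univ _)) := FiniteDimensional.fintypeBasisIndex b
  have hcard : Fintype.card ι = #(hw.id_image.extend (Set.subset_univ _)).toFinset := by
    rw [hι, finrank_eq_card_basis b, Set.toFinset_card]
  have hmaps : s.MapsTo w (hw.id_image.extend (Set.subset_univ _)).toFinset := fun m hm ↦ by
    simpa using Basis.subset_extend hw.id_image (Set.mem_image_of_mem w hm)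
  obtain ⟨g, hg⟩ := hmaps.exists_equiv_extend_of_card_eq hcard hw.injOn
  refine ⟨fun m ↦ g m, ?_, hg⟩
  have hb : LinearIndepOn K id (hw.id_image.extend (Set.subset_univ _)) :=
    hw.id_image.linearIndepOn_extend (Set.subset_univ _)
  exact hb.comp (fun m ↦ ⟨g m, Set.mem_toFinset.1 (g m).2⟩) fun m m' h ↦
    g.injective (Subtype.ext (Subtype.mk.inj h))

theorem isPrincipal_of_sup_ne {V : Submodule K E}
    (hV : ∀ U₁ < V, ∀ U₂ < V, U₁ ⊔ U₂ ≠ V) : V.IsPrincipal := by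
  rcases eq_or_ne V ⊥ with rfl | hne
  · infer_instance
  obtain ⟨v, hv, hv0⟩ := Submodule.exists_mem_ne_zero_of_ne_bot hne
  obtain ⟨C, hC⟩ := Submodule.exists_isCompl (K ∙ v)
  have hle : K ∙ v ≤ V := (Submodule.span_singleton_le_iff_mem _ _).2 hv
  have hlt : C ⊓ V < V := inf_le_right.lt_of_ne fun h ↦
    hv0 (Submodule.disjoint_def.1 hC.disjoint v (Submodule.mem_span_singleton_self v) (h.ge hv).1)
  have hsup : K ∙ v ⊔ C ⊓ V = V := by rw [← sup_inf_assoc_of_le C hle, hC.sup_eq_top, top_inf_eq]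
  exact ⟨v, (hle.eq_of_not_lt fun h ↦ hV _ h _ hlt hsup).symm⟩

theorem le_finrank_sup_update_or [Fintype ι] [DecidableEq ι] [FiniteDimensional K E]
    {V : ι → Submodule K E} {r : ℕ}
    (hV : ∀ T : Finset ι, r ≤ finrank K (T.sup V : Submodule K E) + #Tᶜ)
    {m : ι} {U₁ U₂ : Submodule K E} (hU : U₁ ⊔ U₂ = V m) :
    (∀ T : Finset ι, r ≤ finrank K (T.sup (Function.update V m U₁) : Submodule K E) + #Tᶜ) ∨
    ∀ T : Finset ι, r ≤ finrank K (T.sup (Function.update V m U₂) : Submodule K E) + #Tᶜ := by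
  have sup_erase_le {U : Submodule K E} {T : Finset ι} :
      (T.erase m).sup V ≤ T.sup (Function.update V m U) :=
    (finset_sup_update_of_notMem (T.notMem_erase m) V U).ge.trans
      (Finset.sup_mono (T.erase_subset m))
  -- Violations at `T₁` and `T₂` contradict `hV` at `T₁ ∪ T₂` and `(T₁ ∩ T₂) \ {m}`, because
  -- the dimension is submodular.
  by_contra! h
  obtain ⟨⟨T₁, h₁⟩, T₂, h₂⟩ := h
  have hm₁ : m ∈ T₁ := by
    by_contra hm
    exact h₁.not_ge (finset_sup_update_of_notMem hm V _ ▸ hV T₁)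
  have hm₂ : m ∈ T₂ := by
    by_contra hm
    exact h₂.not_ge (finset_sup_update_of_notMem hm V _ ▸ hV T₂)
  set A₁ := T₁.sup (Function.update V m U₁)
  set A₂ := T₂.sup (Function.update V m U₂)
  have hunion : finrank K ((T₁ ∪ T₂).sup V : Submodule K E) ≤
      finrank K (A₁ ⊔ A₂ : Submodule K E) := by
    refine Submodule.finrank_mono (Finset.sup_le fun x hx ↦ ?_)
    rcases eq_or_ne x m with rfl | hxm
    · rw [← hU]
      exact sup_le_sup (Finset.le_sup_of_le hm₁ (by simp)) (Finset.le_sup_of_le hm₂ (by simp))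
    · rcases Finset.mem_union.1 hx with hx | hx
      · exact le_sup_of_le_left (Finset.le_sup_of_le hx (by simp [hxm]))
      · exact le_sup_of_le_right (Finset.le_sup_of_le hx (by simp [hxm]))
  have hinter : finrank K (((T₁ ∩ T₂).erase m).sup V : Submodule K E) ≤
      finrank K (A₁ ⊓ A₂ : Submodule K E) := by
    refine Submodule.finrank_mono (le_inf ?_ ?_)
    · exact (Finset.sup_mono (Finset.erase_subset_erase m Finset.inter_subset_left)).trans
        sup_erase_le
    · exact (Finset.sup_mono (Finset.erase_subset_erase m Finset.inter_subset_right)).trans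
        sup_erase_le
  have hmodular := Submodule.finrank_sup_add_finrank_inf_eq A₁ A₂
  have hcard := Finset.card_union_add_card_inter T₁ T₂
  have herase := Finset.card_erase_add_one (Finset.mem_inter.2 ⟨hm₁, hm₂⟩)
  have hV₁ := hV (T₁ ∪ T₂)
  have hV₂ := hV ((T₁ ∩ T₂).erase m)
  have := Finset.card_add_card_compl T₁
  have := Finset.card_add_card_compl T₂
  have := Finset.card_add_card_compl (T₁ ∪ T₂)
  have := Finset.card_add_card_compl ((T₁ ∩ T₂).erase m)
  omega

theorem exists_transversal_le_finrank [Fintype ι] [DecidableEq ι] [FiniteDimensional K E]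
    {V : ι → Submodule K E} {r : ℕ}
    (hV : ∀ T : Finset ι, r ≤ finrank K (T.sup V : Submodule K E) + #Tᶜ) :
    ∃ w : ι → E, (∀ m, w m ∈ V m) ∧ r ≤ (Set.range w).finrank K := by
  induction V using WellFoundedLT.induction with
  | ind V ih =>
  by_cases h : ∃ m, ∃ U₁ < V m, ∃ U₂ < V m, U₁ ⊔ U₂ = V m
  · obtain ⟨m, U₁, hU₁, U₂, hU₂, hU⟩ := h
    have shrink {U : Submodule K E} (hUV : U < V m) (hT : ∀ T : Finset ι,
        r ≤ finrank K (T.sup (Function.update V m U) : Submodule K E) + #Tᶜ) :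
        ∃ w : ι → E, (∀ m, w m ∈ V m) ∧ r ≤ (Set.range w).finrank K := by
      have hlt : Function.update V m U < V := update_lt_self_iff.2 hUV
      obtain ⟨w, hw, hr⟩ := ih _ hlt hT
      exact ⟨w, fun x ↦ hlt.le x (hw x), hr⟩
    exact (le_finrank_sup_update_or hV hU).elim (shrink hU₁) (shrink hU₂)
  · push Not at h
    have hprin : ∀ m, (V m).IsPrincipal := fun m ↦ isPrincipal_of_sup_ne (h m)
    refine ⟨fun m ↦ Submodule.IsPrincipal.generator (V m),
      fun m ↦ Submodule.IsPrincipal.generator_mem (V m), (hV Finset.univ).trans_eq ?_⟩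
    have hspan : ⨆ m, K ∙ Submodule.IsPrincipal.generator (V m) = ⨆ m, V m :=
      iSup_congr fun m ↦ Submodule.IsPrincipal.span_singleton_generator (V m)
    rw [Set.finrank, Submodule.span_range_eq_iSup, hspan, Finset.sup_univ_eq_iSup,
      Finset.compl_univ, Finset.card_empty, add_zero]

/-- The ranks of the transversals of a family `V` of subspaces: the dimensions of the spans of
the families that choose a vector in each `V m`. -/
def transversalRanks (V : ι → Submodule K E) : Set ℕ :=
  {r | ∃ w : ι → E, (∀ m, w m ∈ V m) ∧ r = (Set.range w).finrank K}

theorem exists_linearIndependent_of_mem_transversalRanks [Fintype ι] [FiniteDimensional K E]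
    (hι : Fintype.card ι = finrank K E) {V : ι → Submodule K E} {r : ℕ}
    (hr : r ∈ transversalRanks V) :
    ∃ (I : Finset ι) (u : ι → E), #I = r ∧ LinearIndependent K u ∧ ∀ m ∈ I, u m ∈ V m := by
  classical
  obtain ⟨w, hw, rfl⟩ := hr
  obtain ⟨J, a, ha, hspan, hli⟩ := exists_linearIndependent' K w
  have : Fintype J := Fintype.ofInjective a ha
  obtain ⟨u, hu, hua⟩ := exists_linearIndependent_eqOn hι ((linearIndepOn_range_iff ha w).2 hli)
  refine ⟨Finset.univ.image a, u, ?_, hu, fun m hm ↦ ?_⟩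
  · rw [Set.finrank, ← hspan, finrank_span_eq_card hli, Finset.card_image_of_injective _ ha,
      Finset.card_univ]
  · rw [hua (by simpa using hm)]
    exact hw m

/-- Rado's bound on the rank of a transversal of `m ↦ W (c m)`, one for each set `S` of colours:
the vectors with colour in `S` stay in the join of the corresponding subspaces. -/
def radoBound [Fintype ι] [DecidableEq κ] (c : ι → κ) (W : κ → Submodule K E) (S : Finset κ) : ℕ :=
  finrank K (S.sup W : Submodule K E) + #{m | c m ∉ S}

variable [Fintype ι] [DecidableEq κ]

theorem radoBound_empty (c : ι → κ) (W : κ → Submodule K E) :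
    radoBound c W ∅ = Fintype.card ι := by
  rw [radoBound, Finset.sup_empty, finrank_bot]
  simp

theorem radoBound_singleton (c : ι → κ) (W : κ → Submodule K E) (a : κ) :
    radoBound c W {a} = finrank K (W a) + (Fintype.card ι - #{m | c m = a}) := by
  have hcard := Finset.card_filter_add_card_filter_not (s := .univ) fun m ↦ c m = a
  rw [Finset.card_univ] at hcard
  rw [radoBound, Finset.sup_singleton]
  simp only [Finset.mem_singleton]
  omega

theorem radoBound_insert_add (c : ι → κ) (W : κ → Submodule K E) {a : κ} {S : Finset κ}
    (ha : a ∉ S) :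
    radoBound c W (insert a S) + #{m | c m = a} =
      finrank K (W a ⊔ S.sup W : Submodule K E) + #{m | c m ∉ S} := by
  have hcard : #{m | c m ∉ insert a S} + #{m | c m = a} = #{m | c m ∉ S} := by
    classical
    rw [← Finset.card_union_of_disjoint (Finset.disjoint_filter.2 fun m _ ↦ by grind),
      ← Finset.filter_or]
    exact congrArg Finset.card (Finset.filter_congr fun m _ ↦ by grind)
  rw [radoBound, Finset.sup_insert]
  omega

theorem card_filter_notMem_eq_sum [Fintype κ] (c : ι → κ) (S : Finset κ) :
    #{m | c m ∉ S} = ∑ a, if a ∈ S then 0 else #{m | c m = a} := by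
  rw [Finset.card_eq_sum_card_fiberwise (t := Finset.univ) (f := c) (by simp)]
  refine Finset.sum_congr rfl fun a _ ↦ ?_
  split_ifs with ha
  · exact Finset.card_eq_zero.2 (Finset.filter_eq_empty_iff.2 fun m hm ↦ by grind)
  · exact congrArg Finset.card (by grind)

variable {c : ι → κ} {W : κ → Submodule K E}

theorem min_finrank_of_radoBound_le {S : Finset κ}
    (hS : ∀ T, radoBound c W S ≤ radoBound c W T) (a : κ) :
    min (min (Fintype.card ι) (finrank K (W a) + (Fintype.card ι - #{m | c m = a})))
        (min (finrank K (S.sup W : Submodule K E) + #{m | c m = a})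
          (finrank K (W a ⊔ S.sup W : Submodule K E))) =
      finrank K (S.sup W : Submodule K E) + if a ∈ S then 0 else #{m | c m = a} := by
  have hempty := hS ∅
  have hsingleton := hS {a}
  rw [radoBound_empty] at hempty
  rw [radoBound_singleton] at hsingleton
  split_ifs with ha
  · rw [sup_eq_right.2 (Finset.le_sup (f := W) ha)]
    simp only [radoBound] at hempty hsingleton
    omega
  · have hinsert := radoBound_insert_add c W ha
    have hle := hS (insert a S)
    have hfiber : #{m | c m = a} ≤ #{m | c m ∉ S} :=
      Finset.card_le_card fun m hm ↦ by grind
    simp only [radoBound] at hempty hsingleton hinsert hle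
    omega

variable [FiniteDimensional K E]

theorem finrank_range_le_radoBound {w : ι → E} (hw : ∀ m, w m ∈ W (c m)) (S : Finset κ) :
    (Set.range w).finrank K ≤ radoBound c W S := by
  classical
  set T := Finset.univ.filter fun m ↦ c m ∉ S
  have hspan : Submodule.span K (Set.range w) ≤ S.sup W ⊔ Submodule.span K (T.image w) := by
    refine Submodule.span_le.2 (Set.range_subset_iff.2 fun m ↦ ?_)
    by_cases hm : c m ∈ S
    · exact Submodule.mem_sup_left (Finset.le_sup (f := W) hm (hw m))
    · exact Submodule.mem_sup_right
        (Submodule.subset_span (Finset.mem_image_of_mem w (by simpa [T] using hm)))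
  calc (Set.range w).finrank K
      ≤ finrank K (S.sup W : Submodule K E) + (T.image w : Set E).finrank K :=
        (Submodule.finrank_mono hspan).trans (Submodule.finrank_add_le_finrank_add_finrank _ _)
    _ ≤ radoBound c W S :=
        Nat.add_le_add_left ((finrank_span_finset_le_card _).trans Finset.card_image_le) _

theorem isGreatest_transversalRanks (c : ι → κ) (W : κ → Submodule K E) :
    IsGreatest (transversalRanks fun m ↦ W (c m)) (⨅ S, radoBound c W S) := by
  classical
  obtain ⟨w, hw, hr⟩ : ∃ w : ι → E, (∀ m, w m ∈ W (c m)) ∧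
      ⨅ S, radoBound c W S ≤ (Set.range w).finrank K := by
    refine exists_transversal_le_finrank fun T ↦ (ciInf_le' _ (T.image c)).trans ?_
    rw [radoBound, Finset.sup_image]
    refine Nat.add_le_add_left (Finset.card_le_card fun m hm ↦ ?_) _
    simp only [Finset.mem_filter, Finset.mem_compl] at hm ⊢
    exact fun hmT ↦ hm.2 (Finset.mem_image_of_mem c hmT)
  refine ⟨⟨w, hw, hr.antisymm (le_ciInf (finrank_range_le_radoBound hw))⟩, ?_⟩
  rintro _ ⟨w', hw', rfl⟩
  exact le_ciInf (finrank_range_le_radoBound hw')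

theorem isGreatest_transversalRanks_ite (V W : Submodule K E) {n i : ℕ} (hi : i ≤ n) :
    IsGreatest (transversalRanks fun m : Fin n ↦ if (m : ℕ) < i then V else W)
      (min (min n (finrank K V + (n - i)))
        (min (finrank K W + i) (finrank K (V ⊔ W : Submodule K E)))) := by
  let c (m : Fin n) : Bool := decide ((m : ℕ) < i)
  let U (b : Bool) : Submodule K E := if b then V else W
  have htrue : #{m | c m = true} = i := by
    simp only [c, decide_eq_true_eq, Fin.card_filter_val_lt, min_eq_right hi]
  have hfalse : #{m | c m = false} = n - i := by
    have h := Finset.card_filter_add_card_filter_not (s := .univ) fun m ↦ c m = true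
    simp only [Bool.not_eq_true, htrue, Finset.card_univ, Fintype.card_fin] at h
    omega
  have h₀ : radoBound c U ∅ = n := by rw [radoBound_empty, Fintype.card_fin]
  have h₁ : radoBound c U {true} = finrank K V + (n - i) := by
    rw [radoBound_singleton, htrue, Fintype.card_fin]
    rfl
  have h₂ : radoBound c U {false} = finrank K W + i := by
    rw [radoBound_singleton, hfalse, Fintype.card_fin, Nat.sub_sub_self hi]
    rfl
  have h₃ : radoBound c U {true, false} = finrank K (V ⊔ W : Submodule K E) := by
    rw [radoBound, Finset.sup_insert, Finset.sup_singleton]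
    simp [U]
  have hsubsets (S : Finset Bool) : S = ∅ ∨ S = {true} ∨ S = {false} ∨ S = {true, false} := by
    decide +revert
  have hmin : ⨅ S, radoBound c U S = min (min n (finrank K V + (n - i)))
      (min (finrank K W + i) (finrank K (V ⊔ W : Submodule K E))) := by
    refine le_antisymm (le_min
      (le_min ((ciInf_le' _ _).trans_eq h₀) ((ciInf_le' _ _).trans_eq h₁))
      (le_min ((ciInf_le' _ _).trans_eq h₂) ((ciInf_le' _ _).trans_eq h₃))) (le_ciInf fun S ↦ ?_)
    rcases hsubsets S with rfl | rfl | rfl | rfl <;> omega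
  simpa only [hmin, c, U, decide_eq_true_eq] using isGreatest_transversalRanks c U

end LinearAlgebra

section LaurentSeries

open Module HahnSeries
open scoped Finset PowerSeries LaurentSeries

theorem prod_single_one {Γ R ι : Type*} [AddCommMonoid Γ] [PartialOrder Γ]
    [IsOrderedCancelAddMonoid Γ] [CommSemiring R] (s : Finset ι) (d : ι → Γ) :
    ∏ m ∈ s, single (d m) (1 : R) = single (∑ m ∈ s, d m) 1 := by
  classical
  induction s using Finset.induction_on with
  | empty => rfl
  | insert a s ha ih =>
    rw [Finset.prod_insert ha, Finset.sum_insert ha, ih, single_mul_single, one_mul]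

theorem det_single_mul {R ι : Type*} [CommRing R] [Fintype ι] [DecidableEq ι] (d : ι → ℤ)
    (Y : Matrix ι ι R⟦X⟧) :
    (Matrix.of fun p m ↦ single (d m) (1 : R) * (Y p m : R⸨X⸩)).det =
      single (∑ m, d m) 1 * (Y.det : R⸨X⸩) := by
  rw [RingHom.map_det, ← prod_single_one]
  exact Matrix.det_mul_row _ _

theorem det_single {R ι : Type*} [CommRing R] [Fintype ι] [DecidableEq ι] (d : ι → ℤ)
    (A : Matrix ι ι R) :
    (Matrix.of fun p m ↦ (single (d m) (A p m) : R⸨X⸩)).det = single (∑ m, d m) A.det := by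
  have h := det_single_mul d (A.map PowerSeries.C)
  rw [← RingHom.mapMatrix_apply, ← RingHom.map_det] at h
  simpa [C_apply] using h

variable {F : Type*} [Field F]

theorem X_pow_dvd_det {ι : Type*} [Fintype ι] [DecidableEq ι] (Y : Matrix ι ι F⟦X⟧) :
    PowerSeries.X ^ (Fintype.card ι - (Y.map PowerSeries.constantCoeff).rank) ∣ Y.det := by
  obtain ⟨V, U, e, hV, hU, hVU⟩ := (Y.map PowerSeries.constantCoeff).exists_rank_normal_form
  let lift := (PowerSeries.C (R := F)).mapMatrix (m := ι)
  have hdet : (lift V * Y * lift U).det ∣ Y.det := by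
    rw [Matrix.det_mul, Matrix.det_mul, mul_right_comm]
    exact ((((Matrix.isUnit_iff_isUnit_det _).1 (hV.map lift)).mul
      ((Matrix.isUnit_iff_isUnit_det _).1 (hU.map lift))).mul_left_dvd).2 dvd_rfl
  have hconst : (lift V * Y * lift U).map PowerSeries.constantCoeff =
      V * Y.map PowerSeries.constantCoeff * U := by
    simp only [Matrix.map_mul, lift, RingHom.mapMatrix_apply, Matrix.map_map]
    simp [Function.comp_def]
  have hrows : ∀ p ∈ Finset.univ.map (Function.Embedding.inr.trans e.symm.toEmbedding), ∀ m,
      PowerSeries.X ∣ (lift V * Y * lift U) p m := by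
    simp only [Finset.mem_map, Finset.mem_univ, true_and, forall_exists_index]
    rintro _ q rfl m
    rw [PowerSeries.X_dvd_iff]
    change (lift V * Y * lift U).map PowerSeries.constantCoeff _ _ = 0
    rw [hconst, hVU]
    rcases h : e m <;> simp [h]
  simpa using (pow_card_dvd_det_of_dvd_rows hrows).trans hdet

theorem le_order_single_mul {f : F⟦X⟧} {k : ℕ} (hf : PowerSeries.X ^ k ∣ f) {d : ℤ}
    (h0 : single d 1 * (f : F⸨X⸩) ≠ 0) : d + k ≤ (single d 1 * (f : F⸨X⸩)).order := by
  refine (le_order_iff_forall h0).2 fun j hj ↦ ?_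
  rw [coeff_single_mul, one_mul, PowerSeries.coeff_coe]
  split_ifs with h
  · rfl
  · exact PowerSeries.X_pow_dvd_iff.1 hf _ (by omega)

variable {n : ℕ}

/-- The lattice `t^d E = ⟨t^d e 0, …, t^d e (n-1)⟩`; the lattices `tStdLattice`, `stdLattice` and
`tInvStdLattice` are the cases `d = 1, 0, -1`. -/
def scaledStdLattice (F : Type*) [Field F] (n : ℕ) (d : ℤ) : Submodule F⟦X⟧ (Fin n → F⸨X⸩) :=
  Submodule.span F⟦X⟧ (Set.range fun i ↦ Pi.single i (single d (1 : F)))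

/-- The lattices between `t^(d+1) E` and `t^d E`, on which the determinant maxima only depend on
the images in `t^d E / t^(d+1) E`. -/
def closeLattices (F : Type*) [Field F] (n : ℕ) (d : ℤ) :
    Set (Submodule F⟦X⟧ (Fin n → F⸨X⸩)) :=
  Set.Icc (scaledStdLattice F n (d + 1)) (scaledStdLattice F n d)

theorem coeff_single_mul_coe {R : Type*} [CommSemiring R] (d : ℤ) (f : R⟦X⟧) :
    (single d 1 * (f : R⸨X⸩)).coeff d = PowerSeries.constantCoeff f := by
  simp [coeff_single_mul, PowerSeries.coeff_coe]

theorem mem_scaledStdLattice {d : ℤ} {x : Fin n → F⸨X⸩} :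
    x ∈ scaledStdLattice F n d ↔
      ∃ y : Fin n → F⟦X⟧, ∀ p, x p = single d 1 * (y p : F⸨X⸩) := by
  have hsum (y : Fin n → F⟦X⟧) :
      ∑ i, y i • (Pi.single i (single d (1 : F)) : Fin n → F⸨X⸩) =
        fun p ↦ single d 1 * (y p : F⸨X⸩) := by
    ext1 p
    simp [Finset.sum_apply, Pi.single_apply, Algebra.smul_def, mul_comm]
  rw [scaledStdLattice, Submodule.mem_span_range_iff_exists_fun]
  simp only [hsum, funext_iff, eq_comm]

theorem scaledStdLattice_succ_le (d : ℤ) :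
    scaledStdLattice F n (d + 1) ≤ scaledStdLattice F n d := fun x hx ↦ by
  obtain ⟨y, hy⟩ := mem_scaledStdLattice.1 hx
  refine mem_scaledStdLattice.2 ⟨fun p ↦ PowerSeries.X * y p, fun p ↦ ?_⟩
  rw [hy, map_mul, ofPowerSeries_X, ← mul_assoc, single_mul_single, one_mul]

theorem le_order_det {d : Fin n → ℤ} {v : Fin n → Fin n → F⸨X⸩}
    (hv : ∀ m, v m ∈ scaledStdLattice F n (d m)) (h0 : (Matrix.of fun p m ↦ v m p).det ≠ 0) :
    ∑ m, d m + (n - (Set.range fun m p ↦ (v m p).coeff (d m)).finrank F : ℕ) ≤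
      (Matrix.of fun p m ↦ v m p).det.order := by
  choose y hy using fun m ↦ mem_scaledStdLattice.1 (hv m)
  let Y : Matrix (Fin n) (Fin n) F⟦X⟧ := Matrix.of fun p m ↦ y m p
  have hdet : (Matrix.of fun p m ↦ v m p).det = single (∑ m, d m) 1 * (Y.det : F⸨X⸩) := by
    rw [← det_single_mul]
    simp only [Y, hy, Matrix.of_apply]
  have hcoeff : (fun m p ↦ (v m p).coeff (d m)) = (Y.map PowerSeries.constantCoeff).col := by
    ext m p
    simp only [hy, coeff_single_mul_coe, Y, Matrix.col_apply, Matrix.map_apply, Matrix.of_apply]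
  rw [hdet] at h0 ⊢
  rw [hcoeff, Set.finrank, ← Matrix.rank_eq_finrank_span_cols]
  exact le_order_single_mul (by simpa using X_pow_dvd_det Y) h0

instance : IsScalarTower F F⟦X⟧ F⸨X⸩ :=
  .of_algebraMap_smul fun r x ↦ by
    rw [Algebra.smul_def, LaurentSeries.coe_algebraMap, PowerSeries.algebraMap_apply,
      Algebra.algebraMap_self, RingHom.id_apply, ofPowerSeries_C, C_mul_eq_smul]

/-- The degree `d` coefficient vectors of the elements of `X`. For a lattice `X` between
`t^(d+1) E` and `t^d E` this is the image of `X` in `t^d E / t^(d+1) E ≅ F^n`. -/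
def residueSpace (d : ℤ) (X : Submodule F⟦X⟧ (Fin n → F⸨X⸩)) : Submodule F (Fin n → F) :=
  (X.restrictScalars F).map ((coeff.linearMap d).compLeft (Fin n))

variable {d : ℤ} {X : Submodule F⟦X⟧ (Fin n → F⸨X⸩)}

theorem coeff_mem_residueSpace (d : ℤ) {x : Fin n → F⸨X⸩} (hx : x ∈ X) :
    (fun p ↦ (x p).coeff d) ∈ residueSpace d X :=
  Submodule.mem_map_of_mem (f := (coeff.linearMap d).compLeft (Fin n)) hx

theorem residueSpace_sup (d : ℤ) (X Y : Submodule F⟦X⟧ (Fin n → F⸨X⸩)) :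
    residueSpace d (X ⊔ Y) = residueSpace d X ⊔ residueSpace d Y := by
  rw [residueSpace, Submodule.restrictScalars_sup, Submodule.map_sup]
  rfl

theorem residueSpace_finset_sup {κ : Type*} (d : ℤ) (S : Finset κ)
    (X : κ → Submodule F⟦X⟧ (Fin n → F⸨X⸩)) :
    residueSpace d (S.sup X) = S.sup fun a ↦ residueSpace d (X a) :=
  Finset.apply_sup_eq_sup_comp _ (residueSpace_sup d) (by simp [residueSpace])

theorem single_mem_scaledStdLattice (d : ℤ) (w : Fin n → F) :
    (fun p ↦ single d (w p)) ∈ scaledStdLattice F n d :=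
  mem_scaledStdLattice.2 ⟨fun p ↦ PowerSeries.C (w p), fun p ↦ by simp [C_apply]⟩

theorem single_mem_of_mem_residueSpace (hX : X ∈ closeLattices F n d) {w : Fin n → F}
    (hw : w ∈ residueSpace d X) :
    (fun p ↦ single d (w p)) ∈ X := by
  obtain ⟨x, hx, rfl⟩ := hw
  obtain ⟨y, hy⟩ := mem_scaledStdLattice.1 (hX.2 hx)
  have htail : (x - fun p ↦ single d ((x p).coeff d)) ∈ scaledStdLattice F n (d + 1) := by
    refine mem_scaledStdLattice.2 ⟨fun p ↦ .mk fun k ↦ PowerSeries.coeff (k + 1) (y p), fun p ↦ ?_⟩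
    have hconst : (x p).coeff d = PowerSeries.constantCoeff (y p) := by
      rw [hy, coeff_single_mul_coe]
    rw [Pi.sub_apply, hconst, sub_eq_iff_eq_add, hy]
    conv_lhs => rw [(y p).eq_X_mul_shift_add_const]
    rw [map_add, map_mul, ofPowerSeries_X, ofPowerSeries_C, C_apply, mul_add, ← mul_assoc,
      single_mul_single, single_mul_single, one_mul, one_mul, add_zero]
  exact (X.sub_mem_iff_right hx).1 (hX.1 htail)

theorem residueSpace_scaledStdLattice (d : ℤ) :
    residueSpace d (scaledStdLattice F n d) = ⊤ :=
  Submodule.eq_top_iff'.2 fun w ↦ by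
    simpa using coeff_mem_residueSpace d (single_mem_scaledStdLattice d w)

theorem le_of_mem_detValSet {d : Fin n → ℤ} {X : Fin n → Submodule F⟦X⟧ (Fin n → F⸨X⸩)}
    (hup : ∀ m, X m ≤ scaledStdLattice F n (d m)) {r : ℕ}
    (hr : r ∈ upperBounds (transversalRanks fun m ↦ residueSpace (d m) (X m))) {z : ℤ}
    (hz : z ∈ detValSet X) : z ≤ r - n - ∑ m, d m := by
  obtain ⟨v, hv, h0, rfl⟩ := hz
  have horder := le_order_det (fun m ↦ hup m (hv m)) h0
  have hrank := hr ⟨_, fun m ↦ coeff_mem_residueSpace (d m) (hv m), rfl⟩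
  omega

theorem mem_detValSet {d : Fin n → ℤ} {X : Fin n → Submodule F⟦X⟧ (Fin n → F⸨X⸩)}
    (hX : ∀ m, X m ∈ closeLattices F n (d m)) {r : ℕ}
    (hr : r ∈ transversalRanks fun m ↦ residueSpace (d m) (X m)) :
    (r - n - ∑ m, d m : ℤ) ∈ detValSet X := by
  obtain ⟨I, u, rfl, hu, huI⟩ :=
    exists_linearIndependent_of_mem_transversalRanks (by simp) hr
  -- The columns outside `I` only have to lie in `t^(d m + 1) E`, hence in `X m`.
  let e (m : Fin n) : ℤ := if m ∈ I then d m else d m + 1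
  have hsum : ∑ m, e m = ∑ m, d m + (n - #I) := by
    have h (m : Fin n) : e m = d m + 1 - if m ∈ I then 1 else 0 := by
      grind
    simp [h, Finset.sum_add_distrib]
    ring
  have hdet : (Matrix.of fun p m ↦ u m p).det ≠ 0 := by
    have hrows : LinearIndependent F (Matrix.of u).row := hu
    rw [← Matrix.det_transpose]
    exact ((Matrix.isUnit_iff_isUnit_det _).1
      (Matrix.linearIndependent_rows_iff_isUnit.1 hrows)).ne_zero
  refine ⟨fun m p ↦ single (e m) (u m p), fun m ↦ ?_, ?_, ?_⟩
  · by_cases hm : m ∈ I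
    · simpa only [e, if_pos hm] using single_mem_of_mem_residueSpace (hX m) (huI m hm)
    · simpa only [e, if_neg hm] using (hX m).1 (single_mem_scaledStdLattice _ (u m))
  · exact (det_single e (Matrix.of fun p m ↦ u m p)).trans_ne (single_ne_zero hdet)
  · rw [show (Matrix.of fun p m ↦ single (e m) (u m p)).det = single (∑ m, e m) _ from
      det_single e (Matrix.of fun p m ↦ u m p), order_single hdet, hsum]
    ring

theorem isGreatest_detValSet {d : Fin n → ℤ} {X : Fin n → Submodule F⟦X⟧ (Fin n → F⸨X⸩)}
    (hX : ∀ m, X m ∈ closeLattices F n (d m)) {r : ℕ}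
    (hr : IsGreatest (transversalRanks fun m ↦ residueSpace (d m) (X m)) r) :
    IsGreatest (detValSet X) (r - n - ∑ m, d m) :=
  ⟨mem_detValSet hX hr.1, fun _ ↦ le_of_mem_detValSet (fun m ↦ (hX m).2) hr.2⟩

theorem isGreatest_detValSet_cols2 {a b : ℤ} {X Y : Submodule F⟦X⟧ (Fin n → F⸨X⸩)} {i : ℕ}
    (hi : i ≤ n) (hX : X ∈ closeLattices F n a) (hY : Y ∈ closeLattices F n b) :
    IsGreatest (detValSet (cols2 X Y i))
      ((min (min n (finrank F (residueSpace a X) + (n - i)))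
        (min (finrank F (residueSpace b Y) + i)
          (finrank F (residueSpace a X ⊔ residueSpace b Y : Submodule F (Fin n → F)))) : ℕ) -
        n - (i * a + (n - i) * b)) := by
  let d (m : Fin n) : ℤ := if (m : ℕ) < i then a else b
  have hr := isGreatest_transversalRanks_ite (residueSpace a X) (residueSpace b Y) hi
  have hsum : ∑ m, d m = i * a + (n - i) * b := by
    have h (m : Fin n) : d m = b + if (m : ℕ) < i then a - b else 0 := by
      grind
    simp only [h, Finset.sum_add_distrib, Finset.sum_const, Finset.card_univ, Fintype.card_fin,
      ← Finset.sum_filter, Fin.card_filter_val_lt, min_eq_right hi, nsmul_eq_mul]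
    ring
  rw [← hsum]
  refine isGreatest_detValSet (fun m ↦ ?_) ?_
  · unfold cols2 d
    split_ifs <;> assumption
  · convert! hr using 3 with m
    unfold cols2 d
    split_ifs <;> rfl

theorem isGreatest_detValSet_const {P : Submodule F⟦X⟧ (Fin n → F⸨X⸩)}
    (hP : P ∈ closeLattices F n d) :
    IsGreatest (detValSet fun _ ↦ P) (finrank F (residueSpace d P) - n - n * d) := by
  have h := isGreatest_detValSet_cols2 n.zero_le hP hP
  have hcols : cols2 P P 0 = fun _ ↦ P := funext fun _ ↦ ite_self _
  have hle := (residueSpace d P).finrank_le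
  rw [finrank_fin_fun] at hle
  rw [hcols, sup_idem, add_zero, min_self, min_eq_right (by omega)] at h
  simpa using h

end LaurentSeries

section CloseLattices

open Module
open scoped Finset PowerSeries LaurentSeries

variable {F : Type*} [Field F] {n : ℕ}

theorem closeLattices_neg_one :
    closeLattices F n (-1) = Set.Icc (stdLattice F n) (tInvStdLattice F n) := by
  rw [closeLattices, neg_add_cancel, scaledStdLattice, HahnSeries.single_zero_one]
  rfl

theorem tStdLattice_mem_closeLattices : tStdLattice F n ∈ closeLattices F n 1 :=
  ⟨scaledStdLattice_succ_le 1, le_rfl⟩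

theorem isGreatest_detValSet_cols2_tStdLattice {X : Submodule F⟦X⟧ (Fin n → F⸨X⸩)}
    (hX : X ∈ closeLattices F n (-1)) {i : ℕ} (hi : i ≤ n)
    (hdim : i ≤ finrank F (residueSpace (-1) X)) :
    IsGreatest (detValSet (cols2 X (tStdLattice F n) i)) (2 * i - n) := by
  have h := isGreatest_detValSet_cols2 hi hX tStdLattice_mem_closeLattices
  rw [tStdLattice, ← scaledStdLattice, residueSpace_scaledStdLattice, sup_top_eq, finrank_top,
    finrank_fin_fun] at h
  convert! h using 1
  rw [min_eq_left (by omega), min_eq_left (by omega)]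
  ring

variable {κ : Type*} {X : κ → Submodule F⟦X⟧ (Fin n → F⸨X⸩)} {S : Finset κ}

theorem finset_sup_mem_closeLattices {d : ℤ} (hX : ∀ a, X a ∈ closeLattices F n d)
    (hS : S.Nonempty) : S.sup X ∈ closeLattices F n d :=
  ⟨(hX _).1.trans (Finset.le_sup hS.choose_spec), Finset.sup_le fun a _ ↦ (hX a).2⟩

variable [DecidableEq κ] {c : Fin n → κ}

theorem isGreatest_detValSet_cols2_finset_sup (hX : ∀ a, X a ∈ closeLattices F n (-1))
    (hS : S.Nonempty)
    (hmin : ∀ T, radoBound c (fun a ↦ residueSpace (-1) (X a)) S ≤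
      radoBound c (fun a ↦ residueSpace (-1) (X a)) T) (a : κ) :
    IsGreatest (detValSet (cols2 (X a) (S.sup X) #{m | c m = a}))
      (finrank F (residueSpace (-1) (S.sup X)) + if a ∈ S then 0 else #{m | c m = a} : ℕ) := by
  have hcard : #{m | c m = a} ≤ n := (Finset.card_filter_le _ _).trans_eq (by simp)
  have h := isGreatest_detValSet_cols2 hcard (hX a) (finset_sup_mem_closeLattices hX hS)
  have hval := min_finrank_of_radoBound_le hmin a
  rw [Fintype.card_fin] at hval
  rw [residueSpace_finset_sup, hval] at h
  rw [residueSpace_finset_sup]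
  convert! h using 1
  ring

theorem exists_network_formula_of_nonempty [Fintype κ] (hX : ∀ a, X a ∈ closeLattices F n (-1))
    (hS : S.Nonempty)
    (hmin : ∀ T, radoBound c (fun a ↦ residueSpace (-1) (X a)) S ≤
      radoBound c (fun a ↦ residueSpace (-1) (X a)) T) :
    ∃ (fX : κ → ℤ) (fP : ℤ),
      (∀ a, IsGreatest (detValSet (cols2 (X a) (S.sup X) #{m | c m = a})) (fX a)) ∧
      IsGreatest (detValSet fun _ ↦ S.sup X) fP ∧
      (radoBound c (fun a ↦ residueSpace (-1) (X a)) S : ℤ) =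
        ∑ a, fX a - (Fintype.card κ - 1) * fP := by
  refine ⟨_, _, isGreatest_detValSet_cols2_finset_sup hX hS hmin,
    isGreatest_detValSet_const (finset_sup_mem_closeLattices hX hS), ?_⟩
  rw [radoBound, ← residueSpace_finset_sup, card_filter_notMem_eq_sum]
  push_cast
  rw [Finset.sum_add_distrib, Finset.sum_const, Finset.card_univ, nsmul_eq_mul]
  ring

theorem exists_network_formula_of_empty [Fintype κ] (hX : ∀ a, X a ∈ closeLattices F n (-1))
    (hmin : ∀ T, radoBound c (fun a ↦ residueSpace (-1) (X a)) ∅ ≤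
      radoBound c (fun a ↦ residueSpace (-1) (X a)) T) :
    ∃ (fX : κ → ℤ) (fP : ℤ),
      (∀ a, IsGreatest (detValSet (cols2 (X a) (tStdLattice F n) #{m | c m = a})) (fX a)) ∧
      IsGreatest (detValSet fun _ ↦ tStdLattice F n) fP ∧
      (radoBound c (fun a ↦ residueSpace (-1) (X a)) ∅ : ℤ) =
        ∑ a, fX a - (Fintype.card κ - 1) * fP := by
  have hcard (a : κ) : #{m | c m = a} ≤ n :=
    (Finset.card_filter_le _ _).trans_eq (by simp)
  have hdim (a : κ) : #{m | c m = a} ≤ finrank F (residueSpace (-1) (X a)) := by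
    have h := hmin {a}
    rw [radoBound_empty, radoBound_singleton, Fintype.card_fin] at h
    have := hcard a
    omega
  have hsum : (n : ℤ) = ∑ a, (#{m | c m = a} : ℤ) := by
    simpa using congrArg (Nat.cast (R := ℤ)) (card_filter_notMem_eq_sum c ∅)
  refine ⟨_, _, fun a ↦ isGreatest_detValSet_cols2_tStdLattice (hX a) (hcard a) (hdim a),
    isGreatest_detValSet_const tStdLattice_mem_closeLattices, ?_⟩
  rw [radoBound_empty, Fintype.card_fin, tStdLattice, ← scaledStdLattice,
    residueSpace_scaledStdLattice, finrank_top, finrank_fin_fun, Finset.sum_sub_distrib,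
    ← Finset.mul_sum, ← hsum, Finset.sum_const, Finset.card_univ, nsmul_eq_mul]
  ring

theorem close_lattices_network_formula_general [Fintype κ] (c : Fin n → κ)
    (hX : ∀ a, X a ∈ Set.Icc (stdLattice F n) (tInvStdLattice F n)) :
    ∃ P, (P = tStdLattice F n ∨ ∃ S : Finset κ, S.Nonempty ∧ P = S.sup X) ∧
      ∃ (f : ℤ) (fX : κ → ℤ) (fP : ℤ),
        IsGreatest (detValSet fun m ↦ X (c m)) f ∧
        (∀ a, IsGreatest (detValSet (cols2 (X a) P #{m | c m = a})) (fX a)) ∧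
        IsGreatest (detValSet fun _ ↦ P) fP ∧
        f = ∑ a, fX a - (Fintype.card κ - 1) * fP := by
  rw [← closeLattices_neg_one] at hX
  let W (a : κ) : Submodule F (Fin n → F) := residueSpace (-1) (X a)
  obtain ⟨S, hS⟩ := exists_eq_ciInf_of_finite (f := radoBound c W)
  have hf : IsGreatest (detValSet fun m ↦ X (c m)) (radoBound c W S) := by
    have h := isGreatest_detValSet (d := fun _ ↦ -1) (fun m ↦ hX (c m))
      (isGreatest_transversalRanks c W)
    simpa [← hS] using h
  have hmin (T : Finset κ) : radoBound c W S ≤ radoBound c W T := hS.trans_le (ciInf_le' _ T)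
  rcases S.eq_empty_or_nonempty with rfl | hne
  · obtain ⟨fX, fP, hfX, hfP, heq⟩ := exists_network_formula_of_empty hX hmin
    exact ⟨_, .inl rfl, _, fX, fP, hf, hfX, hfP, heq⟩
  · obtain ⟨fX, fP, hfX, hfP, heq⟩ := exists_network_formula_of_nonempty hX hne hmin
    exact ⟨_, .inr ⟨S, hne, rfl⟩, _, fX, fP, hf, hfX, hfP, heq⟩

/-- The index of the lattice from which column `m` is chosen in `cols3 L M N i j`. -/
def blockIndex {n : ℕ} (i j : ℕ) (m : Fin n) : Fin 3 :=
  if (m : ℕ) < i then 0 else if (m : ℕ) < i + j then 1 else 2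

theorem cols3_eq_blockIndex (L M N : Submodule F⟦X⟧ (Fin n → F⸨X⸩)) (i j : ℕ) :
    cols3 L M N i j = fun m ↦ ![L, M, N] (blockIndex i j m) := by
  ext1 m
  unfold cols3 blockIndex
  split_ifs <;> rfl

theorem card_blockIndex (i j k : ℕ) (a : Fin 3) :
    #{m : Fin (i + j + k) | blockIndex i j m = a} = ![i, j, k] a := by
  have hfirst (m : Fin i) : blockIndex i j (Fin.castAdd k (Fin.castAdd j m)) = 0 := by
    simp [blockIndex]
  have hsecond (m : Fin j) : blockIndex i j (Fin.castAdd k (Fin.natAdd i m)) = 1 := by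
    simp [blockIndex]
  have hthird (m : Fin k) : blockIndex i j (Fin.natAdd (i + j) m) = 2 := by
    simp [blockIndex, add_assoc]
  rw [Finset.card_filter, Fin.sum_univ_add, Fin.sum_univ_add]
  simp only [hfirst, hsecond, hthird]
  fin_cases a <;> simp

theorem finset_sup_vec_mem {α : Type*} [SemilatticeSup α] [OrderBot α] (L M N : α)
    {S : Finset (Fin 3)} (hS : S.Nonempty) :
    S.sup ![L, M, N] ∈ ({L, M, N, L ⊔ M, L ⊔ N, M ⊔ N, L ⊔ M ⊔ N} : Set α) := by
  have hcases : S = {0} ∨ S = {1} ∨ S = {2} ∨ S = {0, 1} ∨ S = {0, 2} ∨ S = {1, 2} ∨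
      S = {0, 1, 2} := by
    decide +revert
  rcases hcases with rfl | rfl | rfl | rfl | rfl | rfl | rfl <;> simp [sup_assoc]

end CloseLattices

/-- The main theorem for three "close" lattices `E ⊆ L, M, N ⊆ t⁻¹E`: the
conjectural network formula holds, with the optimal lattice `P` one of
`tE, L, M, N, L+M, L+N, M+N, L+M+N`:
`fᵗ_{ijk}(L,M,N) = fᵗ_{i,j+k}(L,P) + fᵗ_{j,i+k}(M,P) + fᵗ_{k,i+j}(N,P) - 2 fᵗₙ(P)`. -/
theorem close_lattices_network_formula {F : Type*} [Field F] {n : ℕ} (i j k : ℕ)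
    (hijk : i + j + k = n)
    (L M N : Submodule (PowerSeries F) (Fin n → LaurentSeries F))
    (hEL : stdLattice F n ≤ L) (hEM : stdLattice F n ≤ M) (hEN : stdLattice F n ≤ N)
    (hLt : L ≤ tInvStdLattice F n) (hMt : M ≤ tInvStdLattice F n)
    (hNt : N ≤ tInvStdLattice F n) :
    ∃ P ∈ ({tStdLattice F n, L, M, N, L ⊔ M, L ⊔ N, M ⊔ N, L ⊔ M ⊔ N} :
        Set (Submodule (PowerSeries F) (Fin n → LaurentSeries F))),
      ∃ fLMN fLP fMP fNP fP : ℤ,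
        IsGreatest (detValSet (cols3 L M N i j)) fLMN ∧
        IsGreatest (detValSet (cols2 L P i)) fLP ∧
        IsGreatest (detValSet (cols2 M P j)) fMP ∧
        IsGreatest (detValSet (cols2 N P k)) fNP ∧
        IsGreatest (detValSet (fun _ => P)) fP ∧
        fLMN = fLP + fMP + fNP - 2 * fP := by
  subst hijk
  have hX : ∀ a, ![L, M, N] a ∈ Set.Icc (stdLattice F _) (tInvStdLattice F _) :=
    Fin.forall_fin_succ.2 ⟨⟨hEL, hLt⟩, Fin.forall_fin_two.2 ⟨⟨hEM, hMt⟩, hEN, hNt⟩⟩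
  obtain ⟨P, hP, f, fX, fP, hf, hfX, hfP, heq⟩ :=
    close_lattices_network_formula_general (blockIndex i j) hX
  simp only [card_blockIndex] at hfX
  have hmem : P ∈ ({tStdLattice F _, L, M, N, L ⊔ M, L ⊔ N, M ⊔ N, L ⊔ M ⊔ N} : Set _) :=
    hP.imp_right fun ⟨_, hS, h⟩ ↦ h ▸ finset_sup_vec_mem L M N hS
  refine ⟨P, hmem, f, fX 0, fX 1, fX 2, fP, ?_, hfX 0, hfX 1, hfX 2, hfP, ?_⟩
  · rwa [cols3_eq_blockIndex]
  · rw [heq, Fin.sum_univ_three, Fintype.card_fin]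
    norm_num

end
end
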